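/- The square root of the arc length functional is globally Lipschitz continuous with respect to the geodesic distance of G: for all γ₀, γ₁ ∈ 𝓜 one has |√(L(γ₁)) − √(L(γ₀))| ≤ (1/2) · d_G(γ₁, γ₀). In particular, L is bounded on every G-bounded subset of 𝓜. -/

import Mathlib

open MeasureTheory Real Filter Set
open scoped ENNReal Topology RealInnerProductSpace

noncomputable section

/-- Euclidean space `ℝⁿ`. -/
abbrev En (n : ℕ) : Type := EuclideanSpace ℝ (Fin n)

/-- A fundamental domain for the circle `𝕋 = ℝ/ℤ`. -/
def I01 : Set ℝ := Set.Ico (0 : ℝ) 1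

/-- The intrinsic distance on `𝕋 = ℝ/ℤ`, expressed for real representatives. -/
def dT (x y : ℝ) : ℝ := ⨅ k : ℤ, |x - y - (k : ℝ)|

/-- Supremum norm of a (periodic) function on the circle. -/
def supNorm {E : Type*} [NormedAddCommGroup E] (f : ℝ → E) : ℝ := ⨆ x : ℝ, ‖f x‖

/-- The squared Gagliardo seminorm `[v]_{H^σ}²` of a function on the circle, valued in `[0,∞]`. -/
def gagliardoSqE {E : Type*} [NormedAddCommGroup E] (σ : ℝ) (v : ℝ → E) : ℝ≥0∞ :=
  ∫⁻ x in I01, ∫⁻ y in I01, ENNReal.ofReal (‖v y - v x‖ ^ 2 / dT x y ^ (2 * σ + 1))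

/-- Membership in the Sobolev–Slobodeckij space `H^s(𝕋, ℝⁿ)`; for `s ∈ (3/2,2)` such
functions have a `C¹` representative, which we take as the defining data. -/
def InHs {n : ℕ} (s : ℝ) (u : ℝ → En n) : Prop :=
  Function.Periodic u 1 ∧ ContDiff ℝ 1 u ∧ gagliardoSqE (s - 1) (deriv u) < ⊤

/-- The squared `H^s` norm `‖u‖²_{L²} + ‖u'‖²_{L²} + [u']²_{H^{s-1}}`. -/
def HsNormSq {n : ℕ} (s : ℝ) (u : ℝ → En n) : ℝ :=
  (∫ x in I01, ‖u x‖ ^ 2) + (∫ x in I01, ‖deriv u x‖ ^ 2) +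
    (gagliardoSqE (s - 1) (deriv u)).toReal

/-- The `H^s` norm. -/
def HsNorm {n : ℕ} (s : ℝ) (u : ℝ → En n) : ℝ := Real.sqrt (HsNormSq s u)

/-- The `H^s` inner product. -/
def HsInner {n : ℕ} (s : ℝ) (u v : ℝ → En n) : ℝ :=
  (∫ x in I01, ⟪u x, v x⟫) + (∫ x in I01, ⟪deriv u x, deriv v x⟫) +
    ∫ x in I01, ∫ y in I01,
      ⟪deriv u y - deriv u x, deriv v y - deriv v x⟫ / dT x y ^ (2 * (s - 1) + 1)

/-- The manifold `𝓜` of embedded closed curves of class `H^s`: injective (on the circle)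
immersions. -/
def InM {n : ℕ} (s : ℝ) (γ : ℝ → En n) : Prop :=
  InHs s γ ∧ Set.InjOn γ I01 ∧ ∀ x, deriv γ x ≠ 0

/-- The length `L(γ)`. -/
def arcLen {n : ℕ} (γ : ℝ → En n) : ℝ := ∫ x in I01, ‖deriv γ x‖

/-- The arc-length distance `d_γ(x,y)`: the length of the shorter of the two arcs of `γ`
between `x` and `y`. -/
def arcDist {n : ℕ} (γ : ℝ → En n) (x y : ℝ) : ℝ :=
  ⨅ k : ℤ, |∫ t in x..(y + (k : ℝ)), ‖deriv γ t‖|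

/-- Derivative with respect to arc length, `D_γ u = u' / |γ'|`. -/
def Dg {n : ℕ} (γ u : ℝ → En n) (x : ℝ) : En n := ‖deriv γ x‖⁻¹ • deriv u x

/-- `𝒟_γ u (x)`, the pointwise linear map `w ↦ |γ'(x)|⁻² ⟪γ'(x), w⟫ u'(x)`. -/
def DDg {n : ℕ} (γ u : ℝ → En n) (x : ℝ) (w : En n) : En n :=
  ((‖deriv γ x‖ ^ 2)⁻¹ * ⟪deriv γ x, w⟫) • deriv u x

/-- The operator `R^s_γ`. -/
def Rop {n : ℕ} (s : ℝ) (γ u : ℝ → En n) (x y : ℝ) : En n :=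
  (‖γ y - γ x‖ ^ s)⁻¹ • (u y - u x - DDg γ u x (γ y - γ x))

/-- Density of the measure `μ_γ` with respect to `λ ⊗ λ` on `𝕋 × 𝕋`. -/
def muW {n : ℕ} (γ : ℝ → En n) (x y : ℝ) : ℝ :=
  ‖deriv γ x‖ * ‖deriv γ y‖ / ‖γ y - γ x‖

/-- Density of the measure `ν_γ` with respect to `λ ⊗ λ` on `𝕋 × 𝕋`. -/
def nuW {n : ℕ} (γ : ℝ → En n) (x y : ℝ) : ℝ :=
  ‖deriv γ x‖ * ‖deriv γ y‖ / arcDist γ x y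

/-- The tangent-point energy, valued in `[0,∞]`. -/
def EtpE {n : ℕ} (s : ℝ) (γ : ℝ → En n) : ℝ≥0∞ :=
  ∫⁻ x in I01, ∫⁻ y in I01, ENNReal.ofReal (‖Rop s γ γ x y‖ ^ 2 * muW γ x y)

/-- The tangent-point energy, real-valued (finite on `𝓜`). -/
def Etp {n : ℕ} (s : ℝ) (γ : ℝ → En n) : ℝ := (EtpE s γ).toReal

/-- `‖R^s_γ u‖²_{L²(ν_γ)}`, valued in `[0,∞]`. -/
def RnuSqE {n : ℕ} (s : ℝ) (γ u : ℝ → En n) : ℝ≥0∞ :=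
  ∫⁻ x in I01, ∫⁻ y in I01, ENNReal.ofReal (‖Rop s γ u x y‖ ^ 2 * nuW γ x y)

/-- `‖R^s_γ u‖²_{L²(ν_γ)}`, real-valued. -/
def RnuSq {n : ℕ} (s : ℝ) (γ u : ℝ → En n) : ℝ := (RnuSqE s γ u).toReal

/-- The squared `γ`-dependent seminorm `[u]²_{H^s(γ)}`, valued in `[0,∞]`. -/
def gagGammaSqE {n : ℕ} (s : ℝ) (γ u : ℝ → En n) : ℝ≥0∞ :=
  ∫⁻ x in I01, ∫⁻ y in I01,
    ENNReal.ofReal (‖Dg γ u y - Dg γ u x‖ ^ 2 / arcDist γ x y ^ (2 * (s - 1)) * nuW γ x y)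

/-- The squared `γ`-dependent seminorm `[u]²_{H^s(γ)}`, real-valued. -/
def gagGammaSq {n : ℕ} (s : ℝ) (γ u : ℝ → En n) : ℝ := (gagGammaSqE s γ u).toReal

/-- The inner product `⟨u,v⟩_{L²(γ)}`. -/
def innerL2g {n : ℕ} (γ u v : ℝ → En n) : ℝ := ∫ x in I01, ⟪u x, v x⟫ * ‖deriv γ x‖

/-- The inner product `⟨u,v⟩_{H¹(γ)}`. -/
def innerH1g {n : ℕ} (γ u v : ℝ → En n) : ℝ :=
  ∫ x in I01, ⟪Dg γ u x, Dg γ v x⟫ * ‖deriv γ x‖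

/-- The squared `γ`-dependent norm `‖u‖²_{H^s(γ)}`. -/
def HsGammaNormSq {n : ℕ} (s : ℝ) (γ u : ℝ → En n) : ℝ :=
  innerL2g γ u u + innerH1g γ u u + gagGammaSq s γ u

/-- The `γ`-dependent norm `‖u‖_{H^s(γ)}`. -/
def HsGammaNorm {n : ℕ} (s : ℝ) (γ u : ℝ → En n) : ℝ := Real.sqrt (HsGammaNormSq s γ u)

/-- The bilinear form `B¹_γ`. -/
def B1 {n : ℕ} (s : ℝ) (γ u v : ℝ → En n) : ℝ :=
  ∫ x in I01, ∫ y in I01, ⟪Rop s γ u x y, Rop s γ v x y⟫ * muW γ x y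

/-- The bilinear form `B²_γ`. -/
def B2 {n : ℕ} (s : ℝ) (γ u v : ℝ → En n) : ℝ :=
  ∫ x in I01, ∫ y in I01,
    ‖Rop s γ γ x y‖ ^ 2 * (⟪u y - u x, v y - v x⟫ / ‖γ y - γ x‖ ^ 2) * muW γ x y

/-- The bilinear form `B³_γ`. -/
def B3 {n : ℕ} (s : ℝ) (γ u v : ℝ → En n) : ℝ :=
  ∫ x in I01, ∫ y in I01,
    ‖Rop s γ γ x y‖ ^ 2 * (⟪Dg γ u x, Dg γ v x⟫ + ⟪Dg γ u y, Dg γ v y⟫) * muW γ x y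

/-- The Riemannian metric `G_γ(u,v)`. -/
def Gmet {n : ℕ} (s : ℝ) (γ u v : ℝ → En n) : ℝ :=
  2 * B1 s γ u v + (2 * s + 1) * B2 s γ u v + B3 s γ u v + innerH1g γ u v + innerL2g γ u v

/-- The distortion `distor(γ) = sup_{x ≠ y} d_γ(x,y)/|γ(y) − γ(x)|`, valued in `[0,∞]`. -/
def distorE {n : ℕ} (γ : ℝ → En n) : ℝ≥0∞ :=
  ⨆ (x ∈ I01) (y ∈ I01) (_ : x ≠ y), ENNReal.ofReal (arcDist γ x y / ‖γ y - γ x‖)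

/-- The distortion, real-valued. -/
def distor {n : ℕ} (γ : ℝ → En n) : ℝ := (distorE γ).toReal

/-- A `C¹` path `[0,1] → 𝓜 ⊂ H^s(𝕋,ℝⁿ)` (with respect to the `H^s` topology), recorded
together with its velocity field `V`. -/
structure C1Path (s : ℝ) (n : ℕ) where
  Γ : ℝ → ℝ → En n
  V : ℝ → ℝ → En n
  mem : ∀ t ∈ Set.Icc (0 : ℝ) 1, InM s (Γ t)
  memV : ∀ t ∈ Set.Icc (0 : ℝ) 1, InHs s (V t)
  isDeriv : ∀ t ∈ Set.Icc (0 : ℝ) 1,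
    Tendsto (fun h : ℝ => HsNorm s fun x => h⁻¹ • (Γ (t + h) x - Γ t x) - V t x)
      (𝓝[{h : ℝ | t + h ∈ Set.Icc (0 : ℝ) 1 ∧ h ≠ 0}] 0) (𝓝 0)
  contV : ∀ t ∈ Set.Icc (0 : ℝ) 1,
    Tendsto (fun τ : ℝ => HsNorm s fun x => V τ x - V t x) (𝓝[Set.Icc (0 : ℝ) 1] t) (𝓝 0)

/-- Length of a path with respect to `G`. -/
def pathLen {s : ℝ} {n : ℕ} (P : C1Path s n) : ℝ :=
  ∫ t in (0 : ℝ)..1, Real.sqrt (Gmet s (P.Γ t) (P.V t) (P.V t))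

/-- The path (Dirichlet) energy of a path with respect to `G`. -/
def pathEnergy {s : ℝ} {n : ℕ} (P : C1Path s n) : ℝ :=
  (1 / 2) * ∫ t in (0 : ℝ)..1, Gmet s (P.Γ t) (P.V t) (P.V t)

/-- The geodesic distance induced by `G`, valued in `[0,∞]` (`∞` if there is no path). -/
def geodDist (s : ℝ) {n : ℕ} (γ₀ γ₁ : ℝ → En n) : ℝ≥0∞ :=
  ⨅ (P : C1Path s n) (_ : P.Γ 0 = γ₀ ∧ P.Γ 1 = γ₁), ENNReal.ofReal (pathLen P)

/-- `U ⊆ 𝓜` is bounded with respect to the geodesic distance `d_G`. -/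
def GBounded (s : ℝ) {n : ℕ} (U : Set (ℝ → En n)) : Prop :=
  (∀ γ ∈ U, InM s γ) ∧
    ∃ γ₀, InM s γ₀ ∧ ∃ R : ℝ, ∀ γ ∈ U, geodDist s γ γ₀ ≤ ENNReal.ofReal R

/-- Weak convergence in the Hilbert space `H^s(𝕋,ℝⁿ)`. -/
def WeakHsTendsto {n : ℕ} (s : ℝ) (γk : ℕ → ℝ → En n) (γ : ℝ → En n) : Prop :=
  ∀ v : ℝ → En n, InHs s v →
    Tendsto (fun k => HsInner s (γk k) v) atTop (𝓝 (HsInner s γ v))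

/-- Directional derivative of `γ ↦ G_γ(u,v)` at `γ` in direction `w`. -/
def DGdir {n : ℕ} (s : ℝ) (γ w u v : ℝ → En n) : ℝ :=
  deriv (fun t : ℝ => Gmet s (fun x => γ x + t • w x) u v) 0

/-- `F'` is the derivative of the path `F` with respect to the `H^s` norm, on `S`. -/
def IsHsDerivOn {n : ℕ} (s : ℝ) (F F' : ℝ → ℝ → En n) (S : Set ℝ) : Prop :=
  ∀ t ∈ S,
    Tendsto (fun h : ℝ => HsNorm s fun x => h⁻¹ • (F (t + h) x - F t x) - F' t x)
      (𝓝[{h : ℝ | t + h ∈ S ∧ h ≠ 0}] 0) (𝓝 0)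

/-- The path `F` is continuous on `S` with respect to the `H^s` norm. -/
def HsContOn {n : ℕ} (s : ℝ) (F : ℝ → ℝ → En n) (S : Set ℝ) : Prop :=
  ∀ t ∈ S, Tendsto (fun τ : ℝ => HsNorm s fun x => F τ x - F t x) (𝓝[S] t) (𝓝 0)

/-- A solution of the geodesic initial value problem on `[0,∞)`, recorded as a triple
(position `Γ`, velocity `V`, acceleration `W`); the geodesic equation
`Γ̈ + A_Γ(Γ̇)Γ̇ = 0` is expressed weakly via the Koszul formula for the
Christoffel operator `A`. -/
def GeodesicSol {n : ℕ} (s : ℝ) (γ₀ v₀ : ℝ → En n) (Γ V W : ℝ → ℝ → En n) : Prop :=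
  (∀ t ∈ Set.Ici (0 : ℝ), InM s (Γ t) ∧ InHs s (V t) ∧ InHs s (W t)) ∧
  Γ 0 = γ₀ ∧ V 0 = v₀ ∧
  IsHsDerivOn s Γ V (Set.Ici 0) ∧ IsHsDerivOn s V W (Set.Ici 0) ∧
  HsContOn s V (Set.Ici 0) ∧ HsContOn s W (Set.Ici 0) ∧
  ∀ t ∈ Set.Ici (0 : ℝ), ∀ w : ℝ → En n, InHs s w →
    Gmet s (Γ t) (W t) w + DGdir s (Γ t) (V t) (V t) w
      - (1 / 2) * DGdir s (Γ t) w (V t) (V t) = 0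



lemma h_bdd (a : ℝ) : BddBelow (Set.range fun k : ℤ => |a - (k : ℝ)|) :=
  ⟨0, by rintro _ ⟨k, rfl⟩; positivity⟩

lemma dT_le (x y : ℝ) (k : ℤ) : dT x y ≤ |x - y - (k : ℝ)| :=
  ciInf_le (h_bdd (x - y)) k

lemma dT_round (x y : ℝ) : dT x y = |x - y - (round (x - y) : ℝ)| :=
  le_antisymm (dT_le _ _ _) (le_ciInf fun k => round_le _ k)

lemma dT_nonneg (x y : ℝ) : 0 ≤ dT x y := by
  rw [dT_round]; positivity

lemma dT_le_abs (x y : ℝ) : dT x y ≤ |x - y| := by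
  simpa using dT_le x y 0

lemma dT_add_int (x y : ℝ) (j : ℤ) : dT (x + j) y = dT x y := by
  unfold dT
  refine Function.Surjective.iInf_congr (fun k : ℤ => k - j) (fun k => ⟨k + j, by simp⟩) ?_
  intro k
  congr 1; push_cast; ring

lemma dT_add_int' (x y : ℝ) (j : ℤ) : dT x (y + j) = dT x y := by
  unfold dT
  refine Function.Surjective.iInf_congr (fun k : ℤ => k + j) (fun k => ⟨k - j, by simp⟩) ?_
  intro k
  congr 1; push_cast; ring

lemma dT_small (x h : ℝ) (hh : |h| ≤ 1 / 2) : dT x (x + h) = |h| := by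
  apply le_antisymm
  · have := dT_le_abs x (x + h)
    simpa using this
  · apply le_ciInf
    intro k
    have e : x - (x + h) - (k : ℝ) = -(h + k) := by ring
    rw [e, abs_neg]
    by_cases hk : k = 0
    · simp [hk]
    · have h1 : (1 : ℝ) ≤ |(k : ℝ)| := by
        have := Int.one_le_abs hk
        exact_mod_cast this
      have h2 : |(k : ℝ)| ≤ |h + k| + |h| := by
        have := abs_sub (h + k) h
        simpa using this
      linarith

lemma dT_meas : Measurable (fun p : ℝ × ℝ => dT p.1 p.2) := by
  unfold dT
  refine Measurable.iInf fun k => ?_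
  fun_prop

lemma perLint (f : ℝ → ℝ≥0∞) (hf : Function.Periodic f 1) (a : ℝ) :
    ∫⁻ x in I01, f x = ∫⁻ x in Ioc a (a + 1), f x := by
  have h1 : ∫⁻ x in I01, f x = ∫⁻ x in Ioc (0:ℝ) (0 + 1), f x := by
    apply setLIntegral_congr
    unfold I01
    rw [zero_add]
    exact Ico_ae_eq_Ioc
  rw [h1]
  refine IsAddFundamentalDomain.setLIntegral_eq (isAddFundamentalDomain_Ioc one_pos 0)
    (isAddFundamentalDomain_Ioc one_pos a) f ?_
  rintro ⟨g, hg⟩ x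
  obtain ⟨k, rfl⟩ := AddSubgroup.mem_zmultiples_iff.1 hg
  have := hf.zsmul k x
  rw [← this]
  congr 1
  change k • (1:ℝ) + x = _
  ring

lemma gag_shift {E : Type*} [NormedAddCommGroup E] (σ : ℝ) (v : ℝ → E)
    (hv : Function.Periodic v 1) (a : ℝ) (b : ℝ → ℝ) :
    gagliardoSqE σ v = ∫⁻ x in Ioc a (a + 1), ∫⁻ y in Ioc (b x) (b x + 1),
      ENNReal.ofReal (‖v y - v x‖ ^ 2 / dT x y ^ (2 * σ + 1)) := by
  unfold gagliardoSqE
  rw [perLint _ _ a]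
  · refine lintegral_congr fun x => ?_
    refine perLint _ ?_ _
    intro y
    have := dT_add_int' x y 1
    push_cast at this
    simp only [this, hv y]
  · intro x
    have := fun y => dT_add_int x y 1
    push_cast at this
    simp only [this, hv x]

lemma per_of_dT_zero {E : Type*} (v : ℝ → E)
    (hv : Function.Periodic v 1) (x y : ℝ) (h : dT x y = 0) : v x = v y := by
  rw [dT_round, abs_eq_zero] at h
  have := hv.int_mul (round (x - y)) y
  rw [← this]
  congr 1
  linarith

lemma morrey_step {n : ℕ} (σ : ℝ) (hσ : 1 / 2 < σ) (v : ℝ → En n) (hc : Continuous v)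
    (hv : Function.Periodic v 1) (hg : gagliardoSqE σ v < ⊤) (x r ε : ℝ) (hr : 0 < r) (hr1 : r ≤ 1)
    (hε : 0 < ε) :
    ‖(r⁻¹ • ∫ z in x..x + r, v z) - ((r / 2)⁻¹ • ∫ z in x..x + r / 2, v z)‖ ≤
      2 * ε * (gagliardoSqE σ v).toReal / r ^ 2 + r ^ (2 * σ + 1) / ε := by
  set g := gagliardoSqE σ v with hgdef
  have hI : ∀ a b, IntervalIntegrable v volume a b := fun a b => hc.intervalIntegrable a b
  have e1 : ∫ z in Ioc x (x + r), ∫ w in Ioc x (x + r / 2), (v w - v z) =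
      -((r ^ 2 / 2) • ((r⁻¹ • ∫ z in x..x + r, v z) - ((r / 2)⁻¹ • ∫ z in x..x + r / 2, v z))) := by
    rw [← intervalIntegral.integral_of_le (by linarith)]
    have : ∀ z, ∫ w in Ioc x (x + r / 2), (v w - v z) =
        (∫ w in x..x + r / 2, v w) - (r / 2) • v z := by
      intro z
      rw [← intervalIntegral.integral_of_le (by linarith), intervalIntegral.integral_sub (hI _ _)
        (by simp)]
      simp
    simp_rw [this]
    rw [intervalIntegral.integral_sub (_root_.intervalIntegrable_const) (show IntervalIntegrable (fun z => (r / 2) • v z) volume _ _ from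
      Continuous.intervalIntegrable (by fun_prop) _ _)]
    simp only [intervalIntegral.integral_const, intervalIntegral.integral_smul]
    rw [smul_sub, smul_smul, smul_smul, neg_sub]
    congr 1
    · congr 1; field_simp; ring
    · congr 1; field_simp
  have hpt : ∀ z ∈ Ioc x (x + r), ∀ w ∈ Ioc x (x + r / 2), ‖v w - v z‖ₑ ≤
      ENNReal.ofReal ε * ENNReal.ofReal (‖v w - v z‖ ^ 2 / dT z w ^ (2 * σ + 1)) +
      ENNReal.ofReal (r ^ (2 * σ + 1) / ε) := by
    intro z hz w hw
    rw [← ENNReal.ofReal_mul hε.le, ← ENNReal.ofReal_add (by have := dT_nonneg z w; positivity)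
      (by positivity), ← ofReal_norm]
    apply ENNReal.ofReal_le_ofReal
    rcases (dT_nonneg z w).eq_or_lt with h0 | h0
    · rw [per_of_dT_zero v hv z w h0.symm]
      simp
      positivity
    · have hle : dT z w ≤ r := by
        refine (dT_le_abs z w).trans ?_
        rw [abs_le]
        constructor <;> linarith [hz.1, hz.2, hw.1, hw.2]
      have hD : dT z w ^ (2 * σ + 1) ≤ r ^ (2 * σ + 1) :=
        Real.rpow_le_rpow h0.le hle (by linarith)
      have hD0 : 0 < dT z w ^ (2 * σ + 1) := by positivity
      set D := dT z w ^ (2 * σ + 1)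
      set a := ‖v w - v z‖
      have : a ≤ ε * (a ^ 2 / D) + D / ε := by
        have : ε * (a ^ 2 / D) + D / ε - a = ((ε * a - D / 2) ^ 2 + 3 / 4 * D ^ 2) / (ε * D) := by
          field_simp; ring
        have : 0 ≤ ε * (a ^ 2 / D) + D / ε - a := by rw [this]; positivity
        linarith
      have : D / ε ≤ r ^ (2 * σ + 1) / ε := by gcongr
      linarith
  have e2 : ‖∫ z in Ioc x (x + r), ∫ w in Ioc x (x + r / 2), (v w - v z)‖ₑ ≤
      ENNReal.ofReal (ε * g.toReal + r ^ (2 * σ + 1) / ε * (r / 2) * r) := by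
    calc _ ≤ ∫⁻ z in Ioc x (x + r), ∫⁻ w in Ioc x (x + r / 2), ‖v w - v z‖ₑ := by
          refine (enorm_integral_le_lintegral_enorm _).trans (lintegral_mono fun z => ?_)
          exact enorm_integral_le_lintegral_enorm _
      _ ≤ ∫⁻ z in Ioc x (x + r), ∫⁻ w in Ioc x (x + r / 2),
          (ENNReal.ofReal ε * ENNReal.ofReal (‖v w - v z‖ ^ 2 / dT z w ^ (2 * σ + 1)) +
            ENNReal.ofReal (r ^ (2 * σ + 1) / ε)) := by
          refine setLIntegral_mono' measurableSet_Ioc fun z hz => ?_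
          exact setLIntegral_mono' measurableSet_Ioc fun w hw => hpt z hz w hw
      _ = ENNReal.ofReal ε * (∫⁻ z in Ioc x (x + r), ∫⁻ w in Ioc x (x + r / 2),
            ENNReal.ofReal (‖v w - v z‖ ^ 2 / dT z w ^ (2 * σ + 1))) +
            ENNReal.ofReal (r ^ (2 * σ + 1) / ε * (r / 2) * r) := by
          simp_rw [lintegral_add_right _ measurable_const, lintegral_const_mul' _ _ ENNReal.ofReal_ne_top]
          simp only [lintegral_const, MeasurableSet.univ, Measure.restrict_apply, univ_inter,
            Real.volume_Ioc, add_sub_cancel_left]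
          rw [← ENNReal.ofReal_mul (by positivity), ← ENNReal.ofReal_mul (by positivity)]
      _ ≤ ENNReal.ofReal ε * g + ENNReal.ofReal (r ^ (2 * σ + 1) / ε * (r / 2) * r) := by
          gcongr
          rw [hgdef, gag_shift σ v hv x (fun _ => x)]
          refine (lintegral_mono_set (Ioc_subset_Ioc_right (show x + r ≤ x + 1 by linarith))).trans ?_
          refine lintegral_mono fun z => ?_
          exact lintegral_mono_set (Ioc_subset_Ioc_right (show x + r / 2 ≤ x + 1 by linarith))
      _ = _ := by
          rw [ENNReal.ofReal_add (by positivity) (by positivity), ENNReal.ofReal_mul hε.le,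
            ENNReal.ofReal_toReal hg.ne]
  rw [e1, enorm_neg, ← ofReal_norm, ENNReal.ofReal_le_ofReal_iff (by positivity),
    norm_smul, Real.norm_of_nonneg (by positivity)] at e2
  set X := ‖(r⁻¹ • ∫ z in x..x + r, v z) - ((r / 2)⁻¹ • ∫ z in x..x + r / 2, v z)‖
  have : X = (r ^ 2 / 2 * X) * (2 / r ^ 2) := by field_simp
  rw [this]
  calc _ ≤ (ε * g.toReal + r ^ (2 * σ + 1) / ε * (r / 2) * r) * (2 / r ^ 2) := by gcongr
    _ = _ := by field_simp

lemma morrey {n : ℕ} (σ : ℝ) (hσ : 1 / 2 < σ) : ∃ C : ℝ, 0 < C ∧ ∀ v : ℝ → En n, Continuous v →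
    Function.Periodic v 1 → gagliardoSqE σ v < ⊤ → ∀ x η : ℝ, 0 < η →
    ‖v x - ∫ z in x..x + 1, v z‖ ≤ (2 * (gagliardoSqE σ v).toReal / η + η) * C := by
  set q : ℝ := (1 / 2 : ℝ) ^ (σ - 1 / 2) with hq
  have hq0 : 0 < q := by positivity
  have hq1 : q < 1 := Real.rpow_lt_one (by norm_num) (by norm_num) (by linarith)
  refine ⟨(1 - q)⁻¹, inv_pos.2 (by linarith), ?_⟩
  intro v hc hv hg x η hη
  set A : ℕ → En n := fun k => ((1 / 2 : ℝ) ^ k)⁻¹ • ∫ z in x..x + (1 / 2 : ℝ) ^ k, v z with hA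
  have hstep : ∀ k, dist (A k) (A (k + 1)) ≤ (2 * (gagliardoSqE σ v).toReal / η + η) * q ^ k := by
    intro k
    set r : ℝ := (1 / 2 : ℝ) ^ k with hr
    have hr0 : 0 < r := by positivity
    have hr1 : r ≤ 1 := pow_le_one₀ (by norm_num) (by norm_num)
    have h := morrey_step σ hσ v hc hv hg x r (r ^ (σ + 3 / 2) / η) hr0 hr1 (by positivity)
    have e : (1 / 2 : ℝ) ^ (k + 1) = r / 2 := by rw [pow_succ]; ring
    simp only [hA]
    rw [dist_eq_norm, e]
    refine h.trans (le_of_eq ?_)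
    have hqk : q ^ k = r ^ (σ - 1 / 2) := by
      rw [hq, hr, ← Real.rpow_natCast, ← Real.rpow_natCast, ← Real.rpow_mul (by norm_num),
        ← Real.rpow_mul (by norm_num), mul_comm]
    rw [hqk]
    have e1 : r ^ (σ + 3 / 2) = r ^ (σ - 1 / 2) * r ^ 2 := by
      rw [← Real.rpow_natCast, ← Real.rpow_add hr0]; congr 1; push_cast; ring
    have e2 : r ^ (2 * σ + 1) = r ^ (σ - 1 / 2) * r ^ (σ + 3 / 2) := by
      rw [← Real.rpow_add hr0]; congr 1; ring
    rw [e2, e1]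
    have : 0 < r ^ (σ - 1 / 2) := by positivity
    field_simp
  have hlim : Tendsto A atTop (𝓝 (v x)) := by
    have hd : HasDerivAt (fun u => ∫ z in x..u, v z) (v x) x :=
      intervalIntegral.integral_hasDerivAt_right (hc.intervalIntegrable _ _)
        (hc.stronglyMeasurableAtFilter _ _) hc.continuousAt
    have h2 : Tendsto (fun k : ℕ => (1 / 2 : ℝ) ^ k) atTop (𝓝[≠] 0) := by
      rw [tendsto_nhdsWithin_iff]
      exact ⟨tendsto_pow_atTop_nhds_zero_of_lt_one (by norm_num) (by norm_num),
        Eventually.of_forall fun k => by simp⟩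
    have := hd.tendsto_slope_zero.comp h2
    refine this.congr fun k => ?_
    simp [hA]
  have := dist_le_of_le_geometric_of_tendsto₀ q _ hq1 hstep hlim
  rw [dist_comm, dist_eq_norm] at this
  simpa [hA, div_eq_mul_inv] using this



lemma per_deriv {n : ℕ} {u : ℝ → En n} (hu : Function.Periodic u 1) :
    Function.Periodic (deriv u) 1 := by
  intro x
  have h : (fun x => u (x + 1)) = u := funext hu
  rw [← deriv_comp_add_const, h]

lemma int01 {E : Type*} [NormedAddCommGroup E] {f : ℝ → E} (hf : Continuous f) :
    IntegrableOn f I01 :=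
  (hf.integrableOn_Icc (a := 0) (b := 1)).mono_set Ico_subset_Icc_self

lemma meas01 : MeasurableSet I01 := measurableSet_Ico

lemma vol01 : volume I01 = 1 := by simp [I01]

lemma cs01 {p w : ℝ → ℝ} (hp : Continuous p) (hw : Continuous w) (hw0 : ∀ x, 0 < w x) :
    (∫ x in I01, p x) ^ 2 ≤ (∫ x in I01, p x ^ 2 / w x) * ∫ x in I01, w x := by
  have hwne : ∀ x, w x ≠ 0 := fun x => (hw0 x).ne'
  have hc : Continuous fun x => p x ^ 2 / w x := by fun_prop (disch := exact hwne _)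
  set P := ∫ x in I01, p x ^ 2 / w x
  set W := ∫ x in I01, w x
  set Q := ∫ x in I01, p x
  have hW : 0 < W := by
    refine (setIntegral_pos_iff_support_of_nonneg_ae (Eventually.of_forall fun x => (hw0 x).le)
      (int01 hw)).2 ?_
    have : Function.support w = univ := by ext x; simp [hwne x]
    rw [this, univ_inter, vol01]; exact one_pos
  have key : 0 ≤ ∫ x in I01, ((p x ^ 2 / w x - (2 * (Q / W)) * p x) + (Q / W) ^ 2 * w x) := by
    refine integral_nonneg fun x => ?_
    have h := hw0 x
    have : (p x ^ 2 / w x - (2 * (Q / W)) * p x) + (Q / W) ^ 2 * w x =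
        (p x - Q / W * w x) ^ 2 / w x := by field_simp; ring
    show (0:ℝ) ≤ (p x ^ 2 / w x - (2 * (Q / W)) * p x) + (Q / W) ^ 2 * w x
    rw [this]; positivity
  have i1 : IntegrableOn (fun x => p x ^ 2 / w x) I01 := int01 hc
  have i2 : IntegrableOn (fun x => (2 * (Q / W)) * p x) I01 := int01 (by fun_prop)
  have i3 : IntegrableOn (fun x => (Q / W) ^ 2 * w x) I01 := int01 (by fun_prop)
  have i12 : IntegrableOn (fun x => p x ^ 2 / w x - (2 * (Q / W)) * p x) I01 := i1.sub i2
  rw [integral_add i12 i3, integral_sub i1 i2, integral_const_mul, integral_const_mul] at key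
  change 0 ≤ P - 2 * (Q / W) * Q + (Q / W) ^ 2 * W at key
  have e : P - 2 * (Q / W) * Q + (Q / W) ^ 2 * W = (P * W - Q ^ 2) / W := by field_simp; ring
  rw [e] at key
  have := (div_nonneg_iff.1 key)
  rcases this with h | h <;> nlinarith [h.1, h.2]

lemma csn01 {n : ℕ} {f : ℝ → En n} (hf : Continuous f) :
    ‖∫ x in I01, f x‖ ^ 2 ≤ ∫ x in I01, ‖f x‖ ^ 2 := by
  have h := cs01 (p := fun x => ‖f x‖) (w := fun _ => 1) (by fun_prop) (by fun_prop) (by simp)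
  simp [measureReal_def, vol01] at h
  have h2 := norm_integral_le_integral_norm (μ := volume.restrict I01) f
  exact (pow_le_pow_left₀ (norm_nonneg _) h2 2).trans h

lemma dbl_add {μ ν : Measure ℝ} [SFinite ν] (a b : ℝ≥0∞) (ha : a ≠ ⊤) (hb : b ≠ ⊤)
    (k f g : ℝ → ℝ → ℝ≥0∞) (hf : Measurable (Function.uncurry f))
    (h : ∀ x, ∀ᵐ y ∂ν, k x y ≤ a * f x y + b * g x y) :
    ∫⁻ x, ∫⁻ y, k x y ∂ν ∂μ ≤ a * (∫⁻ x, ∫⁻ y, f x y ∂ν ∂μ) + b * ∫⁻ x, ∫⁻ y, g x y ∂ν ∂μ := by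
  have m1' : ∀ x, Measurable fun y => f x y :=
    fun x => hf.comp (measurable_const.prodMk measurable_id)
  have M1 : Measurable fun x => ∫⁻ y, f x y ∂ν := hf.lintegral_prod_right
  rw [← lintegral_const_mul' _ _ ha, ← lintegral_const_mul' _ _ hb,
    ← lintegral_add_left (M1.const_mul _)]
  refine lintegral_mono fun x => ?_
  rw [← lintegral_const_mul' _ _ ha, ← lintegral_const_mul' _ _ hb,
    ← lintegral_add_left ((m1' x).const_mul _)]
  exact lintegral_mono_ae (h x)

lemma gag_add {n : ℕ} (σ : ℝ) {v w : ℝ → En n} (hv : Continuous v) (hw : Continuous w) :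
    gagliardoSqE σ (fun x => v x + w x) ≤ 2 * gagliardoSqE σ v + 2 * gagliardoSqE σ w := by
  unfold gagliardoSqE
  have hm := dT_meas
  refine dbl_add 2 2 (by simp) (by simp) _ _ _ ?_ ?_
  · simp only [Function.uncurry_def]
    have hm2 : Measurable fun p : ℝ × ℝ => dT p.1 p.2 ^ (2 * σ + 1) := hm.pow_const _
    have hv2 : Measurable fun p : ℝ × ℝ => ‖v p.2 - v p.1‖ ^ 2 :=
      Continuous.measurable (by fun_prop)
    exact (hv2.div hm2).ennreal_ofReal
  refine fun x => Eventually.of_forall fun y => ?_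
  have hd : 0 ≤ dT x y ^ (2 * σ + 1) := Real.rpow_nonneg (dT_nonneg _ _) _
  generalize dT x y ^ (2 * σ + 1) = D at hd
  have e2 : ∀ z : ℝ≥0∞, 2 * z = ENNReal.ofReal 2 * z := by simp
  rw [e2, e2, ← ENNReal.ofReal_mul (by norm_num), ← ENNReal.ofReal_mul (by norm_num),
    ← ENNReal.ofReal_add (by positivity) (by positivity)]
  apply ENNReal.ofReal_le_ofReal
  rw [← mul_div_assoc, ← mul_div_assoc, ← add_div]
  apply div_le_div_of_nonneg_right _ hd
  have : v y + w y - (v x + w x) = (v y - v x) + (w y - w x) := by abel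
  rw [this]
  have h1 := norm_add_le (v y - v x) (w y - w x)
  have h2 := pow_le_pow_left₀ (norm_nonneg _) h1 2
  nlinarith [sq_nonneg (‖v y - v x‖ - ‖w y - w x‖)]

lemma gag_smul {n : ℕ} (σ c : ℝ) (v : ℝ → En n) :
    gagliardoSqE σ (fun x => c • v x) = ENNReal.ofReal (c ^ 2) * gagliardoSqE σ v := by
  unfold gagliardoSqE
  rw [← lintegral_const_mul' _ _ ENNReal.ofReal_ne_top]
  refine lintegral_congr fun x => ?_
  rw [← lintegral_const_mul' _ _ ENNReal.ofReal_ne_top]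
  refine lintegral_congr fun y => ?_
  rw [← ENNReal.ofReal_mul (by positivity), ← smul_sub, norm_smul, mul_pow, Real.norm_eq_abs,
    sq_abs, mul_div_assoc]

lemma InHs.dcont {n : ℕ} {s : ℝ} {u : ℝ → En n} (hu : InHs s u) : Continuous (deriv u) :=
  hu.2.1.continuous_deriv le_rfl
lemma InHs.cont {n : ℕ} {s : ℝ} {u : ℝ → En n} (hu : InHs s u) : Continuous u :=
  hu.2.1.continuous
lemma InHs.diff {n : ℕ} {s : ℝ} {u : ℝ → En n} (hu : InHs s u) : Differentiable ℝ u :=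
  hu.2.1.differentiable one_ne_zero

lemma deriv_smul_fun {n : ℕ} {s c : ℝ} {u : ℝ → En n} (hu : InHs s u) :
    deriv (fun x => c • u x) = fun x => c • deriv u x := by
  funext x; exact deriv_fun_const_smul c (hu.diff x)
lemma deriv_add_fun' {n : ℕ} {s : ℝ} {u v : ℝ → En n} (hu : InHs s u) (hv : InHs s v) :
    deriv (fun x => u x + v x) = fun x => deriv u x + deriv v x := by
  funext x; exact deriv_fun_add (hu.diff x) (hv.diff x)

lemma InHs.smul {n : ℕ} {s : ℝ} (c : ℝ) {u : ℝ → En n} (hu : InHs s u) :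
    InHs s (fun x => c • u x) := by
  refine ⟨fun x => by simp [hu.1 x], hu.2.1.const_smul c, ?_⟩
  rw [deriv_smul_fun hu, gag_smul]
  exact ENNReal.mul_lt_top ENNReal.ofReal_lt_top hu.2.2

lemma InHs.add {n : ℕ} {s : ℝ} {u v : ℝ → En n} (hu : InHs s u) (hv : InHs s v) :
    InHs s (fun x => u x + v x) := by
  refine ⟨fun x => by simp [hu.1 x, hv.1 x], hu.2.1.add hv.2.1, ?_⟩
  rw [deriv_add_fun' hu hv]
  refine (gag_add _ hu.dcont hv.dcont).trans_lt ?_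
  exact ENNReal.add_lt_top.2 ⟨ENNReal.mul_lt_top (by simp) hu.2.2, ENNReal.mul_lt_top (by simp) hv.2.2⟩

lemma InHs.sub {n : ℕ} {s : ℝ} {u v : ℝ → En n} (hu : InHs s u) (hv : InHs s v) :
    InHs s (fun x => u x - v x) := by
  have := hu.add (hv.smul (-1))
  simpa [sub_eq_add_neg] using this

lemma gag_le_N {n : ℕ} (s : ℝ) (u : ℝ → En n) :
    (gagliardoSqE (s - 1) (deriv u)).toReal ≤ HsNorm s u ^ 2 ∧
    (∫ x in I01, ‖u x‖ ^ 2) ≤ HsNorm s u ^ 2 := by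
  have h1 : 0 ≤ ∫ x in I01, ‖u x‖ ^ 2 := integral_nonneg fun x => by positivity
  have h2 : 0 ≤ ∫ x in I01, ‖deriv u x‖ ^ 2 := integral_nonneg fun x => by positivity
  have h3 : 0 ≤ (gagliardoSqE (s - 1) (deriv u)).toReal := ENNReal.toReal_nonneg
  unfold HsNorm HsNormSq
  rw [Real.sq_sqrt (by positivity)]
  constructor <;> linarith

lemma embed (n : ℕ) (s : ℝ) (hs : 3 / 2 < s) : ∃ C : ℝ, 0 < C ∧ ∀ u : ℝ → En n, InHs s u →
    ∀ x, ‖u x‖ ≤ C * HsNorm s u ∧ ‖deriv u x‖ ≤ C * HsNorm s u := by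
  obtain ⟨C, hC, h⟩ := morrey (n := n) (s - 1) (by linarith)
  have hd : ∀ u : ℝ → En n, InHs s u → ∀ x, ‖deriv u x‖ ≤ 3 * C * HsNorm s u := by
    intro u hu x
    have hN : 0 ≤ HsNorm s u := Real.sqrt_nonneg _
    have h0 : ∫ z in x..x + 1, deriv u z = 0 := by
      rw [intervalIntegral.integral_deriv_eq_sub (fun z _ => hu.diff z)
        (hu.dcont.intervalIntegrable _ _), hu.1 x, sub_self]
    have hg := (gag_le_N s u).1
    have hη : ∀ η > 0, ‖deriv u x‖ ≤ (2 * HsNorm s u ^ 2 / η + η) * C := by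
      intro η hη
      have := h (deriv u) hu.dcont (per_deriv hu.1) hu.2.2 x η hη
      rw [h0, sub_zero] at this
      refine this.trans ?_
      gcongr
    rcases hN.eq_or_lt with h0 | h0
    · rw [← h0] at hη ⊢
      have : ∀ η > 0, ‖deriv u x‖ ≤ 0 + η := by
        intro η hη'
        have := hη (η / C) (by positivity)
        have e : (2 * 0 ^ 2 / (η / C) + η / C) * C = 0 + η := by field_simp; ring
        rwa [e] at this
      simpa using le_of_forall_pos_le_add this
    · have := hη _ h0
      have e : (2 * HsNorm s u ^ 2 / HsNorm s u + HsNorm s u) * C = 3 * C * HsNorm s u := by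
        field_simp; ring
      rwa [e] at this
  refine ⟨3 * C + 1, by positivity, fun u hu x => ?_⟩
  have hN : 0 ≤ HsNorm s u := Real.sqrt_nonneg _
  refine ⟨?_, (hd u hu x).trans (by nlinarith)⟩
  -- reduce to the fundamental domain
  have hx : u x = u (Int.fract x) := by
    have := hu.1.int_mul (-⌊x⌋) x
    rw [← this]; congr 1; rw [Int.fract]; push_cast; ring
  rw [hx]
  set y := Int.fract x
  have hy : y ∈ Icc (0:ℝ) 1 := ⟨Int.fract_nonneg _, (Int.fract_lt_one _).le⟩
  have hlip : ∀ z ∈ I01, ‖u y - u z‖ ≤ 3 * C * HsNorm s u := by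
    intro z hz
    have := Convex.norm_image_sub_le_of_norm_deriv_le (f := u) (s := univ) (x := z) (y := y)
      (fun z _ => hu.diff z) (fun z _ => hd u hu z) convex_univ trivial trivial
    refine this.trans ?_
    have : ‖y - z‖ ≤ 1 := by
      rw [Real.norm_eq_abs, abs_le]
      constructor <;> linarith [hy.1, hy.2, hz.1, hz.2]
    calc _ ≤ 3 * C * HsNorm s u * 1 := by gcongr
      _ = _ := by ring
  have hI : ‖∫ z in I01, u z‖ ≤ HsNorm s u :=
    abs_le_of_sq_le_sq' ((csn01 hu.cont).trans (gag_le_N s u).2) hN |>.2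
  have e : u y = (∫ z in I01, (u y - u z)) + ∫ z in I01, u z := by
    rw [integral_sub (int01 continuous_const) (int01 hu.cont)]
    simp [measureReal_def, vol01]
  have h2 : ‖∫ z in I01, (u y - u z)‖ ≤ 3 * C * HsNorm s u := by
    have := norm_setIntegral_le_of_norm_le_const (μ := volume) (s := I01) (by simp [vol01]) hlip
    simpa [measureReal_def, vol01] using this
  rw [e]
  refine (norm_add_le _ _).trans ?_
  linarith

/-- half interval -/
def SS : Set ℝ := Ioc (-(1 / 2) : ℝ) (1 / 2)

lemma measSS : MeasurableSet SS := measurableSet_Ioc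

lemma inner_shift (f : ℝ → ℝ≥0∞) (hf : Function.Periodic f 1) (x : ℝ) :
    ∫⁻ y in I01, f y = ∫⁻ k in SS, f (x + k) := by
  rw [perLint f hf (x - 1 / 2), ← lintegral_indicator measurableSet_Ioc,
    ← lintegral_indicator measSS, ← lintegral_add_left_eq_self _ x]
  refine lintegral_congr fun k => ?_
  by_cases hk : k ∈ SS
  · rw [indicator_of_mem, indicator_of_mem hk]
    obtain ⟨h1, h2⟩ := hk
    constructor <;> linarith
  · rw [indicator_of_notMem, indicator_of_notMem hk]
    intro h; apply hk
    obtain ⟨h1, h2⟩ := h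
    constructor <;> linarith

lemma SS_abs {k : ℝ} (hk : k ∈ SS) : |k| ≤ 1 / 2 := abs_le.2 ⟨hk.1.le, hk.2⟩

lemma gag_eq {n : ℕ} (σ : ℝ) (v : ℝ → En n) (hv : Function.Periodic v 1) :
    gagliardoSqE σ v = ∫⁻ x in I01, ∫⁻ k in SS,
      ENNReal.ofReal (‖v (x + k) - v x‖ ^ 2 / |k| ^ (2 * σ + 1)) := by
  unfold gagliardoSqE
  refine lintegral_congr fun x => ?_
  rw [inner_shift _ _ x]
  · refine setLIntegral_congr_fun measurableSet_Ioc fun k hk => ?_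
    simp only [dT_small x k (SS_abs hk)]
  · intro y
    have := dT_add_int' x y 1
    push_cast at this
    simp only [this, hv y]

lemma lint_scale (φ : ℝ → ℝ≥0∞) (θ : ℝ) (hθ : 0 < θ) :
    ∫⁻ h, φ (θ * h) = ENNReal.ofReal θ⁻¹ * ∫⁻ k, φ k := by
  have h := (measurableEmbedding_mulLeft₀ hθ.ne').lintegral_map (μ := volume) φ
  rw [← h]
  have := Real.map_volume_mul_left hθ.ne'
  rw [abs_of_pos (inv_pos.2 hθ)] at this
  rw [this, lintegral_smul_measure]; rfl

lemma J_bound {n : ℕ} (s : ℝ) (hs : 3 / 2 < s) (u : ℝ → En n) (hu : InHs s u) :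
    ∫⁻ x in I01, ∫⁻ h in SS,
      ENNReal.ofReal (‖u (x + h) - u x - h • deriv u x‖ ^ 2 / |h| ^ (2 * s + 1)) ≤
    gagliardoSqE (s - 1) (deriv u) := by
  rw [gag_eq _ _ (per_deriv hu.1)]
  refine lintegral_mono fun x => ?_
  set d := deriv u with hd
  have hdc : Continuous d := hu.dcont
  have hpt : ∀ h : ℝ, ENNReal.ofReal (‖u (x + h) - u x - h • d x‖ ^ 2 / |h| ^ (2 * s + 1)) ≤
      ∫⁻ θ in Ioo (0:ℝ) 1, ENNReal.ofReal (‖d (x + θ * h) - d x‖ ^ 2 / |h| ^ (2 * s - 1)) := by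
    intro h
    rcases eq_or_ne h 0 with rfl | hne
    · simp
    have hh : 0 < |h| := abs_pos.2 hne
    have hIoo : volume.restrict (Ioo (0:ℝ) 1) = volume.restrict I01 :=
      Measure.restrict_congr_set Ioo_ae_eq_Ico
    have e1 : u (x + h) - u x - h • d x = h • ∫ θ in I01, (d (x + θ * h) - d x) := by
      rw [integral_sub (int01 (by fun_prop)) (int01 continuous_const), smul_sub]
      congr 1
      · have h2 : ∫ θ in (0:ℝ)..1, h • d (x + θ * h) = u (x + 1 * h) - u (x + 0 * h) := by
          refine intervalIntegral.integral_eq_sub_of_hasDerivAt (f := fun θ => u (x + θ * h)) ?_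
            (Continuous.intervalIntegrable (by fun_prop) _ _)
          intro θ _
          have h1 : HasDerivAt (fun θ : ℝ => x + θ * h) h θ := by
            simpa using ((hasDerivAt_id θ).mul_const h).const_add x
          exact (hu.diff (x + θ * h)).hasDerivAt.scomp θ h1
        rw [one_mul, zero_mul, add_zero] at h2
        rw [← h2, intervalIntegral.integral_smul, intervalIntegral.integral_of_le zero_le_one]
        congr 1
        exact setIntegral_congr_set Ico_ae_eq_Ioc.symm
      · simp [measureReal_def, vol01]
    rw [hIoo, ← ofReal_integral_eq_lintegral_ofReal (int01 (by fun_prop))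
      (Eventually.of_forall fun θ => by positivity)]
    apply ENNReal.ofReal_le_ofReal
    rw [integral_div, e1, norm_smul, mul_pow]
    have e2 : |h| ^ (2 * s + 1) = |h| ^ 2 * |h| ^ (2 * s - 1) := by
      rw [← Real.rpow_natCast, ← Real.rpow_add hh]; congr 1; push_cast; ring
    rw [e2, Real.norm_eq_abs, mul_div_mul_left _ _ (by positivity)]
    gcongr
    exact csn01 (by fun_prop)
  calc _ ≤ ∫⁻ h in SS, ∫⁻ θ in Ioo (0:ℝ) 1,
        ENNReal.ofReal (‖d (x + θ * h) - d x‖ ^ 2 / |h| ^ (2 * s - 1)) :=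
        lintegral_mono fun h => hpt h
    _ = ∫⁻ θ in Ioo (0:ℝ) 1, ∫⁻ h in SS,
        ENNReal.ofReal (‖d (x + θ * h) - d x‖ ^ 2 / |h| ^ (2 * s - 1)) := by
        rw [lintegral_lintegral_swap]
        apply Measurable.aemeasurable
        have : Measurable d := hdc.measurable
        simp only [Function.uncurry_def]
        fun_prop
    _ ≤ ∫⁻ θ in Ioo (0:ℝ) 1, ∫⁻ k in SS,
        ENNReal.ofReal (‖d (x + k) - d x‖ ^ 2 / |k| ^ (2 * (s - 1) + 1)) := by
        refine setLIntegral_mono' measurableSet_Ioo fun θ hθ => ?_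
        have ep : 2 * (s - 1) + 1 = 2 * s - 1 := by ring
        rw [ep]
        set f : ℝ → ℝ≥0∞ := fun k => ENNReal.ofReal (‖d (x + k) - d x‖ ^ 2 / |k| ^ (2 * s - 1)) with hf
        have e : ∀ h, ENNReal.ofReal (‖d (x + θ * h) - d x‖ ^ 2 / |h| ^ (2 * s - 1)) =
            ENNReal.ofReal (θ ^ (2 * s - 1)) * f (θ * h) := by
          intro h
          have h0 : 0 < θ ^ (2 * s - 1) := Real.rpow_pos_of_pos hθ.1 _
          rw [hf, ← ENNReal.ofReal_mul h0.le, abs_mul, abs_of_pos hθ.1,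
            Real.mul_rpow hθ.1.le (abs_nonneg _)]
          congr 1
          rw [mul_div_assoc', mul_div_mul_left _ _ h0.ne']
        simp_rw [e]
        rw [← lintegral_indicator measSS]
        calc _ ≤ ∫⁻ h, ENNReal.ofReal (θ ^ (2 * s - 1)) * SS.indicator f (θ * h) := by
              refine lintegral_mono fun h => ?_
              by_cases hh : h ∈ SS
              · have : θ * h ∈ SS := by
                  obtain ⟨h1, h2⟩ := hh
                  obtain ⟨t1, t2⟩ := hθ
                  constructor <;> nlinarith
                rw [indicator_of_mem hh, indicator_of_mem this]
              · rw [indicator_of_notMem hh]; exact zero_le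
          _ = ENNReal.ofReal (θ ^ (2 * s - 1)) * (ENNReal.ofReal θ⁻¹ * ∫⁻ k in SS, f k) := by
              rw [lintegral_const_mul' _ _ ENNReal.ofReal_ne_top, lint_scale _ _ hθ.1,
                lintegral_indicator measSS]
          _ ≤ 1 * ∫⁻ k in SS, f k := by
              rw [← mul_assoc, ← ENNReal.ofReal_mul (Real.rpow_nonneg hθ.1.le _)]
              gcongr
              rw [← ENNReal.ofReal_one]
              apply ENNReal.ofReal_le_ofReal
              rw [← Real.rpow_neg_one, ← Real.rpow_add hθ.1]
              exact Real.rpow_le_one hθ.1.le hθ.2.le (by linarith)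
          _ = _ := one_mul _
    _ = _ := by simp



/-- normalized Taylor remainder squared -/
def rho {n : ℕ} (s : ℝ) (u : ℝ → En n) (x h : ℝ) : ℝ :=
  ‖u (x + h) - u x - h • deriv u x‖ ^ 2 / |h| ^ (2 * s + 1)

lemma rho_nonneg {n : ℕ} (s : ℝ) (u : ℝ → En n) (x h : ℝ) : 0 ≤ rho s u x h := by
  unfold rho; positivity

lemma muW_nonneg {n : ℕ} (γ : ℝ → En n) (x y : ℝ) : 0 ≤ muW γ x y := by
  unfold muW; positivity

lemma R_bound {n : ℕ} (s c M : ℝ) (hs : 3 / 2 < s) (hc : 0 < c) (γ v : ℝ → En n) (x h : ℝ)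
    (h1 : ∀ x, c ≤ ‖deriv γ x‖) (h2 : ∀ x, ‖deriv γ x‖ ≤ M) (h3 : ∀ x, ‖deriv v x‖ ≤ M)
    (h4 : c * |h| ≤ ‖γ (x + h) - γ x‖) :
    ‖Rop s γ v x (x + h)‖ ^ 2 * muW γ x (x + h) ≤
      (2 * (1 + (M / c) ^ 2) * (M ^ 2 / c ^ (2 * s + 1))) * (rho s v x h + rho s γ x h) := by
  have hM : 0 < M := hc.trans_le ((h1 0).trans (h2 0))
  rcases eq_or_ne h 0 with rfl | hne
  · simp [muW]
    have := rho_nonneg s v x 0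
    have := rho_nonneg s γ x 0
    positivity
  have hh : 0 < |h| := abs_pos.2 hne
  set m := deriv γ x with hm
  have hm0 : 0 < ‖m‖ := hc.trans_le (h1 x)
  set Δ := γ (x + h) - γ x with hΔ
  have hΔ0 : 0 < ‖Δ‖ := (by positivity : 0 < c * |h|).trans_le h4
  set a := ‖v (x + h) - v x - h • deriv v x‖ with ha
  set b := ‖Δ - h • m‖ with hb
  have key : ‖v (x + h) - v x - DDg γ v x Δ‖ ≤ a + M / c * b := by
    have e : v (x + h) - v x - DDg γ v x Δ = (v (x + h) - v x - h • deriv v x) -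
        ((‖m‖ ^ 2)⁻¹ * ⟪m, Δ - h • m⟫) • deriv v x := by
      have : (‖m‖ ^ 2)⁻¹ * ⟪m, Δ - h • m⟫ = (‖m‖ ^ 2)⁻¹ * ⟪m, Δ⟫ - h := by
        rw [inner_sub_right, real_inner_smul_right, real_inner_self_eq_norm_sq]
        field_simp
      rw [this, sub_smul, DDg]; abel
    rw [e]
    refine (norm_sub_le _ _).trans ?_
    gcongr
    rw [norm_smul, norm_mul, Real.norm_of_nonneg (by positivity)]
    have i1 : ‖⟪m, Δ - h • m⟫‖ ≤ ‖m‖ * b := norm_inner_le_norm _ _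
    calc _ ≤ (‖m‖ ^ 2)⁻¹ * (‖m‖ * b) * M := by gcongr; exact h3 x
      _ = M / ‖m‖ * b := by field_simp
      _ ≤ M / c * b := by gcongr; exact h1 x
  have key2 : ‖v (x + h) - v x - DDg γ v x Δ‖ ^ 2 ≤ 2 * (1 + (M / c) ^ 2) * (a ^ 2 + b ^ 2) := by
    refine (pow_le_pow_left₀ (norm_nonneg _) key 2).trans ?_
    set q := M / c
    nlinarith [sq_nonneg (a - q * b), sq_nonneg (q * a), sq_nonneg b]
  have hpow : (‖Δ‖ ^ s)⁻¹ ^ 2 * (1 / ‖Δ‖) ≤ (1 / c ^ (2 * s + 1)) * (1 / |h| ^ (2 * s + 1)) := by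
    have e : (‖Δ‖ ^ s)⁻¹ ^ 2 * (1 / ‖Δ‖) = 1 / ‖Δ‖ ^ (2 * s + 1) := by
      rw [Real.rpow_add hΔ0, Real.rpow_one, mul_comm 2 s, Real.rpow_mul hΔ0.le, Real.rpow_two]
      field_simp
    rw [e, one_div_mul_one_div, ← Real.mul_rpow hc.le hh.le]
    gcongr
  unfold Rop muW rho
  rw [norm_smul, mul_pow, Real.norm_of_nonneg (by positivity)]
  calc _ = ‖v (x + h) - v x - DDg γ v x Δ‖ ^ 2 * (‖m‖ * ‖deriv γ (x + h)‖) *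
        ((‖Δ‖ ^ s)⁻¹ ^ 2 * (1 / ‖Δ‖)) := by ring
    _ ≤ (2 * (1 + (M / c) ^ 2) * (a ^ 2 + b ^ 2)) * (M * M) *
        ((1 / c ^ (2 * s + 1)) * (1 / |h| ^ (2 * s + 1))) := by
        gcongr
        · exact h2 x
        · exact h2 _
    _ = _ := by ring

lemma rho_meas {n : ℕ} (s : ℝ) (u : ℝ → En n) (hu : InHs s u) :
    Measurable (Function.uncurry fun x h => ENNReal.ofReal (rho s u x h)) := by
  have h1 := hu.cont
  have h2 := hu.dcont
  simp only [Function.uncurry_def, rho]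
  have hm2 : Measurable fun p : ℝ × ℝ => |p.2| ^ (2 * s + 1) :=
    Measurable.pow_const (Continuous.measurable (by fun_prop)) _
  have hv2 : Measurable fun p : ℝ × ℝ => ‖u (p.1 + p.2) - u p.1 - p.2 • deriv u p.1‖ ^ 2 :=
    Continuous.measurable (by fun_prop)
  exact (hv2.div hm2).ennreal_ofReal

lemma dblB {n : ℕ} (s A K : ℝ) (hs : 3 / 2 < s) (hA : 0 ≤ A) (hK : 0 ≤ K) (γ u : ℝ → En n)
    (hγ : InHs s γ) (hu : InHs s u) (gγ : gagliardoSqE (s - 1) (deriv γ) ≤ ENNReal.ofReal K)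
    (gu : gagliardoSqE (s - 1) (deriv u) ≤ ENNReal.ofReal K) (Φ : ℝ → ℝ → ℝ)
    (hΦ0 : ∀ x y, 0 ≤ Φ x y) (hΦp : ∀ x, Function.Periodic (Φ x) 1)
    (hΦ : ∀ x h, |h| ≤ 1 / 2 → Φ x (x + h) ≤ A * (rho s u x h + rho s γ x h)) :
    ∫ x in I01, ∫ y in I01, Φ x y ≤ A * K + A * K := by
  have e : ‖∫ x in I01, ∫ y in I01, Φ x y‖ₑ ≤ ENNReal.ofReal (A * K + A * K) := by
    calc _ ≤ ∫⁻ x in I01, ∫⁻ y in I01, ‖Φ x y‖ₑ := by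
          refine (enorm_integral_le_lintegral_enorm _).trans (lintegral_mono fun z => ?_)
          exact enorm_integral_le_lintegral_enorm _
      _ = ∫⁻ x in I01, ∫⁻ k in SS, ‖Φ x (x + k)‖ₑ := by
          refine lintegral_congr fun x => inner_shift _ (fun y => ?_) x
          simp only [hΦp x y]
      _ ≤ ENNReal.ofReal A * (∫⁻ x in I01, ∫⁻ k in SS, ENNReal.ofReal (rho s u x k)) +
          ENNReal.ofReal A * (∫⁻ x in I01, ∫⁻ k in SS, ENNReal.ofReal (rho s γ x k)) := by
          refine dbl_add _ _ ENNReal.ofReal_ne_top ENNReal.ofReal_ne_top _ _ _ (rho_meas s u hu) ?_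
          intro x
          refine (ae_restrict_iff' measSS).2 (Eventually.of_forall fun k hk => ?_)
          rw [← ENNReal.ofReal_mul hA, ← ENNReal.ofReal_mul hA,
            ← ENNReal.ofReal_add (mul_nonneg hA (rho_nonneg _ _ _ _))
              (mul_nonneg hA (rho_nonneg _ _ _ _)), ← ofReal_norm,
              Real.norm_of_nonneg (hΦ0 _ _), ← mul_add]
          exact ENNReal.ofReal_le_ofReal (hΦ x k (SS_abs hk))
      _ ≤ ENNReal.ofReal A * ENNReal.ofReal K + ENNReal.ofReal A * ENNReal.ofReal K := by
          gcongr
          · exact (J_bound s hs u hu).trans gu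
          · exact (J_bound s hs γ hγ).trans gγ
      _ = _ := by
          rw [ENNReal.ofReal_add (by positivity) (by positivity), ENNReal.ofReal_mul hA]
  rw [← ofReal_norm, ENNReal.ofReal_le_ofReal_iff (by positivity)] at e
  exact (le_abs_self _).trans e

lemma B_nonneg {n : ℕ} (s : ℝ) (γ u : ℝ → En n) :
    0 ≤ B1 s γ u u ∧ 0 ≤ B2 s γ u u ∧ 0 ≤ B3 s γ u u ∧ 0 ≤ innerH1g γ u u ∧ 0 ≤ innerL2g γ u u := by
  refine ⟨?_, ?_, ?_, ?_, ?_⟩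
  · refine integral_nonneg fun x => integral_nonneg fun y => ?_
    exact mul_nonneg real_inner_self_nonneg (muW_nonneg _ _ _)
  · refine integral_nonneg fun x => integral_nonneg fun y => ?_
    exact mul_nonneg (mul_nonneg (by positivity) (div_nonneg real_inner_self_nonneg (by positivity)))
      (muW_nonneg _ _ _)
  · refine integral_nonneg fun x => integral_nonneg fun y => ?_
    exact mul_nonneg (mul_nonneg (by positivity) (add_nonneg real_inner_self_nonneg
      real_inner_self_nonneg)) (muW_nonneg _ _ _)
  · refine integral_nonneg fun x => ?_
    exact mul_nonneg real_inner_self_nonneg (by positivity)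
  · refine integral_nonneg fun x => ?_
    exact mul_nonneg real_inner_self_nonneg (by positivity)

lemma G_bound (n : ℕ) (s c M K : ℝ) (hs : 3 / 2 < s) (hc : 0 < c) (hM : 0 < M) (hK : 0 ≤ K) :
    ∃ C : ℝ, ∀ γ u : ℝ → En n, InHs s γ → InHs s u → (∀ x, c ≤ ‖deriv γ x‖) →
      (∀ x, ‖deriv γ x‖ ≤ M) → (∀ x, ‖deriv u x‖ ≤ M) → (∀ x, ‖u x‖ ≤ M) →
      (∀ x h, |h| ≤ 1 / 2 → c * |h| ≤ ‖γ (x + h) - γ x‖) →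
      gagliardoSqE (s - 1) (deriv γ) ≤ ENNReal.ofReal K →
      gagliardoSqE (s - 1) (deriv u) ≤ ENNReal.ofReal K → Gmet s γ u u ≤ C := by
  set A0 : ℝ := 2 * (1 + (M / c) ^ 2) * (M ^ 2 / c ^ (2 * s + 1)) with hA0
  have hA0p : 0 ≤ A0 := by positivity
  set A : ℝ := 4 * (1 + (M / c) ^ 2) * A0 with hA
  have hAp : 0 ≤ A := by positivity
  refine ⟨2 * (A * K + A * K) + (2 * s + 1) * (A * K + A * K) + (A * K + A * K) +
    (M / c) ^ 2 * M + M ^ 2 * M, ?_⟩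
  intro γ u hγ hu h1 h2 h3 h3' h4 gγ gu
  have hDg : ∀ x, ‖Dg γ u x‖ ≤ M / c := by
    intro x
    rw [Dg, norm_smul, norm_inv, norm_norm, div_eq_inv_mul]
    have := h1 x
    have := h3 x
    gcongr
  have pγ := hγ.1
  have pu := hu.1
  have pγ' := per_deriv hγ.1
  have pu' := per_deriv hu.1
  have hRu : ∀ x h, |h| ≤ 1 / 2 → ‖Rop s γ u x (x + h)‖ ^ 2 * muW γ x (x + h) ≤
      A0 * (rho s u x h + rho s γ x h) := fun x h hh =>
    R_bound s c M hs hc γ u x h h1 h2 h3 (h4 x h hh)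
  have hRγ : ∀ x h, |h| ≤ 1 / 2 → ‖Rop s γ γ x (x + h)‖ ^ 2 * muW γ x (x + h) ≤
      2 * A0 * (rho s u x h + rho s γ x h) := fun x h hh => by
    have := R_bound s c M hs hc γ γ x h h1 h2 h2 (h4 x h hh)
    refine this.trans ?_
    have := mul_nonneg hA0p (rho_nonneg s u x h)
    rw [← hA0]; linarith
  have b1 : B1 s γ u u ≤ A * K + A * K := by
    refine dblB s A K hs hAp hK γ u hγ hu gγ gu _
      (fun x y => mul_nonneg real_inner_self_nonneg (muW_nonneg _ _ _)) (fun x y => ?_) ?_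
    · simp [Rop, muW, pγ y, pu y, pγ' y]
    · intro x h hh
      rw [real_inner_self_eq_norm_sq]
      refine (hRu x h hh).trans ?_
      have := rho_nonneg s u x h
      have := rho_nonneg s γ x h
      gcongr
      rw [hA]
      nlinarith [mul_nonneg hA0p (sq_nonneg (M / c))]
  have b2 : B2 s γ u u ≤ A * K + A * K := by
    refine dblB s A K hs hAp hK γ u hγ hu gγ gu _
      (fun x y => mul_nonneg (mul_nonneg (by positivity) (div_nonneg real_inner_self_nonneg
        (by positivity))) (muW_nonneg _ _ _)) (fun x y => ?_) ?_
    · simp [Rop, muW, pγ y, pu y, pγ' y]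
    · intro x h hh
      rw [real_inner_self_eq_norm_sq]
      have hq : ‖u (x + h) - u x‖ ^ 2 / ‖γ (x + h) - γ x‖ ^ 2 ≤ (M / c) ^ 2 := by
        rcases eq_or_ne h 0 with rfl | hne
        · simp; positivity
        have hh0 : 0 < |h| := abs_pos.2 hne
        rw [← div_pow]
        have hl := Convex.norm_image_sub_le_of_norm_deriv_le (f := u) (s := univ) (x := x)
          (y := x + h) (fun z _ => hu.diff z) (fun z _ => h3 z) convex_univ trivial trivial
        simp only [add_sub_cancel_left, Real.norm_eq_abs] at hl
        refine pow_le_pow_left₀ (by positivity) ?_ 2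
        calc _ ≤ (M * |h|) / (c * |h|) :=
              div_le_div₀ (by positivity) hl (by positivity) (h4 x h hh)
          _ = M / c := by field_simp
      have r1 := hRγ x h hh
      have r0 : 0 ≤ ‖Rop s γ γ x (x + h)‖ ^ 2 * muW γ x (x + h) :=
        mul_nonneg (by positivity) (muW_nonneg _ _ _)
      have := rho_nonneg s u x h
      have := rho_nonneg s γ x h
      calc _ = (‖u (x + h) - u x‖ ^ 2 / ‖γ (x + h) - γ x‖ ^ 2) *
            (‖Rop s γ γ x (x + h)‖ ^ 2 * muW γ x (x + h)) := by ring
        _ ≤ (M / c) ^ 2 * (2 * A0 * (rho s u x h + rho s γ x h)) := by gcongr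
        _ = (2 * (M / c) ^ 2 * A0) * (rho s u x h + rho s γ x h) := by ring
        _ ≤ _ := by
          gcongr
          rw [hA]
          nlinarith [mul_nonneg hA0p (sq_nonneg (M / c))]
  have b3 : B3 s γ u u ≤ A * K + A * K := by
    refine dblB s A K hs hAp hK γ u hγ hu gγ gu _
      (fun x y => mul_nonneg (mul_nonneg (by positivity) (add_nonneg real_inner_self_nonneg
        real_inner_self_nonneg)) (muW_nonneg _ _ _)) (fun x y => ?_) ?_
    · simp [Rop, muW, Dg, pγ y, pγ' y, pu' y]
    · intro x h hh
      rw [real_inner_self_eq_norm_sq, real_inner_self_eq_norm_sq]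
      have r1 := hRγ x h hh
      have r0 : 0 ≤ ‖Rop s γ γ x (x + h)‖ ^ 2 * muW γ x (x + h) :=
        mul_nonneg (by positivity) (muW_nonneg _ _ _)
      have := rho_nonneg s u x h
      have := rho_nonneg s γ x h
      calc _ = (‖Dg γ u x‖ ^ 2 + ‖Dg γ u (x + h)‖ ^ 2) *
            (‖Rop s γ γ x (x + h)‖ ^ 2 * muW γ x (x + h)) := by ring
        _ ≤ ((M / c) ^ 2 + (M / c) ^ 2) * (2 * A0 * (rho s u x h + rho s γ x h)) := by
            have := hDg x
            have := hDg (x + h)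
            gcongr
        _ = (4 * (M / c) ^ 2 * A0) * (rho s u x h + rho s γ x h) := by ring
        _ ≤ _ := by
          gcongr
          rw [hA]
          nlinarith [mul_nonneg hA0p (sq_nonneg (M / c))]
  have one : ∀ (f : ℝ → ℝ) (B : ℝ), (∀ x, 0 ≤ f x) → (∀ x, f x ≤ B) → ∫ x in I01, f x ≤ B := by
    intro f B h0 hB
    have := norm_setIntegral_le_of_norm_le_const (μ := volume) (s := I01) (f := f) (C := B)
      (by simp [vol01]) (fun x _ => by rw [Real.norm_of_nonneg (h0 x)]; exact hB x)
    simp [measureReal_def, vol01] at this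
    exact (le_abs_self _).trans this
  have b4 : innerH1g γ u u ≤ (M / c) ^ 2 * M := by
    refine one _ _ (fun x => mul_nonneg real_inner_self_nonneg (by positivity)) fun x => ?_
    rw [real_inner_self_eq_norm_sq]
    have := hDg x
    have := h2 x
    gcongr
  have b5 : innerL2g γ u u ≤ M ^ 2 * M := by
    refine one _ _ (fun x => mul_nonneg real_inner_self_nonneg (by positivity)) fun x => ?_
    rw [real_inner_self_eq_norm_sq]
    have := h3' x
    have := h2 x
    gcongr
  unfold Gmet
  have : 0 ≤ 2 * s + 1 := by linarith
  gcongr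



lemma N_nonneg {n : ℕ} (s : ℝ) (u : ℝ → En n) : 0 ≤ HsNormSq s u := by
  have h1 : 0 ≤ ∫ x in I01, ‖u x‖ ^ 2 := integral_nonneg fun x => by positivity
  have h2 : 0 ≤ ∫ x in I01, ‖deriv u x‖ ^ 2 := integral_nonneg fun x => by positivity
  have h3 : 0 ≤ (gagliardoSqE (s - 1) (deriv u)).toReal := ENNReal.toReal_nonneg
  unfold HsNormSq; positivity

lemma N_smul {n : ℕ} {s : ℝ} (c : ℝ) {u : ℝ → En n} (hu : InHs s u) :
    HsNormSq s (fun x => c • u x) = c ^ 2 * HsNormSq s u := by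
  unfold HsNormSq
  rw [deriv_smul_fun hu, gag_smul, ENNReal.toReal_mul, ENNReal.toReal_ofReal (by positivity)]
  simp only [norm_smul, mul_pow, Real.norm_eq_abs, sq_abs, integral_const_mul]
  ring

lemma sq_add_le' {n : ℕ} (a b : En n) : ‖a + b‖ ^ 2 ≤ 2 * ‖a‖ ^ 2 + 2 * ‖b‖ ^ 2 := by
  have := norm_add_le a b
  nlinarith [norm_nonneg (a + b), sq_nonneg (‖a‖ - ‖b‖)]

lemma l2_add {n : ℕ} {u v : ℝ → En n} (hu : Continuous u) (hv : Continuous v) :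
    ∫ x in I01, ‖u x + v x‖ ^ 2 ≤ 2 * (∫ x in I01, ‖u x‖ ^ 2) + 2 * ∫ x in I01, ‖v x‖ ^ 2 := by
  rw [← integral_const_mul, ← integral_const_mul, ← integral_add]
  · exact integral_mono (int01 (by fun_prop)) (int01 (by fun_prop)) fun x => sq_add_le' _ _
  · exact int01 (by fun_prop)
  · exact int01 (by fun_prop)

lemma N_add {n : ℕ} {s : ℝ} {u v : ℝ → En n} (hu : InHs s u) (hv : InHs s v) :
    HsNormSq s (fun x => u x + v x) ≤ 2 * HsNormSq s u + 2 * HsNormSq s v := by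
  unfold HsNormSq
  rw [deriv_add_fun' hu hv]
  have h1 := l2_add hu.cont hv.cont
  have h2 := l2_add hu.dcont hv.dcont
  have h3 := gag_add (s - 1) hu.dcont hv.dcont
  have t1 := ENNReal.mul_lt_top (a := 2) (by simp) hu.2.2
  have t2 := ENNReal.mul_lt_top (a := 2) (by simp) hv.2.2
  have h4 := ENNReal.toReal_mono (ENNReal.add_lt_top.2 ⟨t1, t2⟩).ne h3
  rw [ENNReal.toReal_add t1.ne t2.ne, ENNReal.toReal_mul, ENNReal.toReal_mul] at h4
  simp only [ENNReal.toReal_ofNat] at h4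
  linarith

abbrev J : Set ℝ := Icc (0 : ℝ) 1

/-- a family that is continuous in the space -/
def Fam {n : ℕ} (s : ℝ) (F : ℝ → ℝ → En n) : Prop :=
  (∀ t ∈ J, InHs s (F t)) ∧
    ∀ t ∈ J, Tendsto (fun τ : ℝ => HsNorm s fun x => F τ x - F t x) (𝓝[J] t) (𝓝 0)

lemma famV {s : ℝ} {n : ℕ} (P : C1Path s n) : Fam s P.V := ⟨P.memV, P.contV⟩

lemma famΓ {s : ℝ} {n : ℕ} (P : C1Path s n) : Fam s P.Γ := by
  refine ⟨fun t ht => (P.mem t ht).1, fun t ht => ?_⟩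
  have hd := P.isDeriv t ht
  have key : ∀ h, t + h ∈ J → h ≠ 0 → HsNormSq s (fun x => P.Γ (t + h) x - P.Γ t x) ≤
      h ^ 2 * (2 * HsNorm s (fun x => h⁻¹ • (P.Γ (t + h) x - P.Γ t x) - P.V t x) ^ 2 +
        2 * HsNormSq s (P.V t)) := by
    intro h hh h0
    have a1 := ((P.mem _ hh).1.sub (P.mem t ht).1).smul h⁻¹
    have a2 := a1.sub (P.memV t ht)
    have a3 := N_add a2 (P.memV t ht)
    have e : (fun x => P.Γ (t + h) x - P.Γ t x) = fun x => h • (h⁻¹ • (P.Γ (t + h) x - P.Γ t x)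
        - P.V t x + P.V t x) := by
      funext x; rw [sub_add_cancel, smul_smul, mul_inv_cancel₀ h0, one_smul]
    rw [e, N_smul h (a2.add (P.memV t ht))]
    unfold HsNorm
    rw [Real.sq_sqrt (N_nonneg _ _)]
    gcongr
  have zero : HsNorm s (fun x => P.Γ t x - P.Γ t x) = 0 := by
    have := N_smul 0 (P.memV t ht)
    simp only [zero_smul] at this
    simp [HsNorm, sub_self, this]
  have lim : Tendsto (fun h : ℝ => HsNorm s fun x => P.Γ (t + h) x - P.Γ t x)
      (𝓝[{h : ℝ | t + h ∈ Set.Icc (0 : ℝ) 1 ∧ h ≠ 0}] 0) (𝓝 0) := by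
    have l0 : Tendsto (fun h : ℝ => h) (𝓝[{h : ℝ | t + h ∈ Set.Icc (0 : ℝ) 1 ∧ h ≠ 0}] 0) (𝓝 0) :=
      tendsto_nhdsWithin_of_tendsto_nhds tendsto_id
    have l1 := Real.continuous_sqrt.tendsto _ |>.comp ((l0.pow 2).mul (((hd.pow 2).const_mul 2).add_const
      (2 * HsNormSq s (P.V t))))
    simp only [ne_eq, OfNat.ofNat_ne_zero, not_false_eq_true, zero_pow, zero_mul, Real.sqrt_zero] at l1
    refine squeeze_zero' (Eventually.of_forall fun h => Real.sqrt_nonneg _) ?_ l1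
    filter_upwards [self_mem_nhdsWithin] with h hh
    exact Real.sqrt_le_sqrt (key h hh.1 hh.2)
  rw [Metric.tendsto_nhdsWithin_nhds] at lim ⊢
  intro ε hε
  obtain ⟨δ, hδ, h⟩ := lim ε hε
  refine ⟨δ, hδ, fun {τ} hτ hd => ?_⟩
  rcases eq_or_ne τ t with rfl | hne
  · rw [zero]; simpa using hε
  · have := @h (τ - t) ⟨by simpa using hτ, sub_ne_zero.2 hne⟩ (by simpa [Real.dist_eq] using hd)
    simpa using this

lemma Fam.Nbdd {n : ℕ} {s : ℝ} {F : ℝ → ℝ → En n} (hF : Fam s F) :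
    ∃ K, 0 ≤ K ∧ ∀ t ∈ J, HsNormSq s (F t) ≤ K := by
  suffices h : ∃ K, ∀ t ∈ J, HsNormSq s (F t) ≤ K by
    obtain ⟨K, h⟩ := h
    exact ⟨K, (N_nonneg _ _).trans (h 0 (by simp [J])), h⟩
  refine (isCompact_Icc : IsCompact J).induction_on (p := fun S => ∃ K, ∀ t ∈ S, HsNormSq s (F t) ≤ K) ⟨0, by simp⟩ ?_ ?_ ?_
  · rintro S T hST ⟨K, h⟩; exact ⟨K, fun t ht => h t (hST ht)⟩
  · rintro S T ⟨K, h⟩ ⟨K', h'⟩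
    refine ⟨max K K', ?_⟩
    rintro t (ht | ht)
    · exact (h t ht).trans (le_max_left _ _)
    · exact (h' t ht).trans (le_max_right _ _)
  · intro t ht
    have h1 := (hF.2 t ht).eventually (gt_mem_nhds zero_lt_one)
    refine ⟨{τ | τ ∈ J ∧ HsNorm s (fun x => F τ x - F t x) < 1}, ?_, 2 + 2 * HsNormSq s (F t), ?_⟩
    · filter_upwards [h1, self_mem_nhdsWithin] with τ a b using ⟨b, a⟩
    · rintro τ ⟨hτ, hn⟩
      have := N_add ((hF.1 τ hτ).sub (hF.1 t ht)) (hF.1 t ht)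
      simp only [sub_add_cancel] at this
      have h2 : HsNormSq s (fun x => F τ x - F t x) ≤ 1 := by
        have h3 : HsNormSq s (fun x => F τ x - F t x) = HsNorm s (fun x => F τ x - F t x) ^ 2 :=
          (Real.sq_sqrt (N_nonneg _ _)).symm
        have : 0 ≤ HsNorm s (fun x => F τ x - F t x) := Real.sqrt_nonneg _
        rw [h3]; nlinarith
      have e : HsNormSq s (fun x => F τ x) = HsNormSq s (F τ) := rfl
      linarith

lemma deriv_sub_fun' {n : ℕ} {s : ℝ} {u v : ℝ → En n} (hu : InHs s u) (hv : InHs s v) :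
    deriv (fun x => u x - v x) = fun x => deriv u x - deriv v x := by
  funext x; exact deriv_fun_sub (hu.diff x) (hv.diff x)

/-- joint continuity from uniform continuity in time -/
lemma joint {n : ℕ} {F : ℝ → ℝ → En n} (hc : ∀ t ∈ J, Continuous (F t))
    (e : ℝ → ℝ → ℝ) (he : ∀ t ∈ J, Tendsto (e t) (𝓝[J] t) (𝓝 0))
    (hb : ∀ t ∈ J, ∀ τ ∈ J, ∀ x, ‖F τ x - F t x‖ ≤ e t τ) :
    ContinuousOn (fun p : ℝ × ℝ => F p.1 p.2) (J ×ˢ univ) := by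
  rintro ⟨t, x⟩ ⟨ht, -⟩
  simp only at ht
  have f1 : Tendsto (fun p : ℝ × ℝ => p.1) (𝓝[J ×ˢ univ] (t, x)) (𝓝[J] t) := by
    rw [nhdsWithin_prod_eq]; exact tendsto_fst
  have f2 : Tendsto (fun p : ℝ × ℝ => p.2) (𝓝[J ×ˢ univ] (t, x)) (𝓝 x) := by
    rw [nhdsWithin_prod_eq, nhdsWithin_univ]; exact tendsto_snd
  have g1 : Tendsto (fun p : ℝ × ℝ => F p.1 p.2 - F t p.2) (𝓝[J ×ˢ univ] (t, x)) (𝓝 0) := by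
    refine squeeze_zero_norm' ?_ ((he t ht).comp f1)
    filter_upwards [self_mem_nhdsWithin] with p hp
    exact hb t ht p.1 hp.1 p.2
  have g2 := ((hc t ht).tendsto x).comp f2
  have := g1.add g2
  simpa [ContinuousWithinAt] using this

lemma Fam.joint {n : ℕ} {s : ℝ} (hs : 3 / 2 < s) {F : ℝ → ℝ → En n} (hF : Fam s F) :
    ContinuousOn (fun p : ℝ × ℝ => F p.1 p.2) (J ×ˢ univ) ∧
    ContinuousOn (fun p : ℝ × ℝ => deriv (F p.1) p.2) (J ×ˢ univ) := by
  obtain ⟨C, hC, h⟩ := embed n s hs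
  have he : ∀ t ∈ J, Tendsto (fun τ => C * HsNorm s fun x => F τ x - F t x) (𝓝[J] t) (𝓝 0) := by
    intro t ht; simpa using (hF.2 t ht).const_mul C
  constructor
  · refine _root_.joint (fun t ht => (hF.1 t ht).cont) _ he fun t ht τ hτ x => ?_
    exact (h _ ((hF.1 τ hτ).sub (hF.1 t ht)) x).1
  · refine _root_.joint (F := fun t => deriv (F t)) (fun t ht => (hF.1 t ht).dcont) _ he fun t ht τ hτ x => ?_
    have := (h _ ((hF.1 τ hτ).sub (hF.1 t ht)) x).2
    rwa [deriv_sub_fun' (hF.1 τ hτ) (hF.1 t ht)] at this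

lemma Fam.bdd {n : ℕ} {s : ℝ} (hs : 3 / 2 < s) {F : ℝ → ℝ → En n} (hF : Fam s F) :
    ∃ M, 0 < M ∧ ∀ t ∈ J, (∀ x, ‖F t x‖ ≤ M) ∧ (∀ x, ‖deriv (F t) x‖ ≤ M) ∧
      gagliardoSqE (s - 1) (deriv (F t)) ≤ ENNReal.ofReal M := by
  obtain ⟨C, hC, h⟩ := embed n s hs
  obtain ⟨K, hK, hN⟩ := hF.Nbdd
  have hb : ∀ t ∈ J, C * HsNorm s (F t) ≤ C * √K + K + 1 := by
    intro t ht
    have : HsNorm s (F t) ≤ √K := Real.sqrt_le_sqrt (hN t ht)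
    nlinarith
  refine ⟨C * √K + K + 1, by positivity, fun t ht => ⟨fun x => ?_, fun x => ?_, ?_⟩⟩
  · exact ((h _ (hF.1 t ht) x).1).trans (hb t ht)
  · exact ((h _ (hF.1 t ht) x).2).trans (hb t ht)
  · rw [← ENNReal.ofReal_toReal (hF.1 t ht).2.2.ne]
    refine ENNReal.ofReal_le_ofReal ?_
    have h1 := (gag_le_N s (F t)).1
    have h2 : HsNorm s (F t) ^ 2 = HsNormSq s (F t) := Real.sq_sqrt (N_nonneg _ _)
    have := hN t ht
    have : 0 ≤ C * √K := by positivity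
    linarith

/-- clamp to the unit interval -/
def cl (t : ℝ) : ℝ := max 0 (min 1 t)

lemma cl_mem (t : ℝ) : cl t ∈ J := ⟨le_max_left _ _, max_le zero_le_one (min_le_left _ _)⟩
lemma cl_eq {t : ℝ} (h : t ∈ J) : cl t = t := by
  unfold cl; rw [min_eq_right h.2, max_eq_right h.1]
lemma cl_cont : Continuous cl := by unfold cl; fun_prop

lemma Fam.cont {n : ℕ} {s : ℝ} (hs : 3 / 2 < s) {F : ℝ → ℝ → En n} (hF : Fam s F) :
    Continuous (fun p : ℝ × ℝ => F (cl p.1) p.2) ∧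
    Continuous (fun p : ℝ × ℝ => deriv (F (cl p.1)) p.2) := by
  have hc : Continuous fun p : ℝ × ℝ => (cl p.1, p.2) :=
    (cl_cont.comp continuous_fst).prodMk continuous_snd
  have hm : ∀ p : ℝ × ℝ, (cl p.1, p.2) ∈ J ×ˢ (univ : Set ℝ) := fun p => ⟨cl_mem _, trivial⟩
  exact ⟨(hF.joint hs).1.comp_continuous hc hm, (hF.joint hs).2.comp_continuous hc hm⟩

lemma bilip {n : ℕ} {s : ℝ} (hs : 3 / 2 < s) {F : ℝ → ℝ → En n} (hF : Fam s F)
    (hM : ∀ t ∈ J, InM s (F t)) :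
    ∃ c, 0 < c ∧ ∀ t ∈ J, (∀ x, c ≤ ‖deriv (F t) x‖) ∧
      ∀ x h, |h| ≤ 1 / 2 → c * |h| ≤ ‖F t (x + h) - F t x‖ := by
  set q : ℝ × ℝ × ℝ → En n := fun p => ∫ θ in (0:ℝ)..1, deriv (F (cl p.1)) (p.2.1 + θ * p.2.2) with hq
  have hqc : Continuous q := by
    refine intervalIntegral.continuous_parametric_intervalIntegral_of_continuous' ?_ 0 1
    have := (hF.cont hs).2
    exact this.comp (by fun_prop : Continuous fun p : (ℝ × ℝ × ℝ) × ℝ => (p.1.1, p.1.2.1 + p.2 * p.1.2.2))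
  have hqe : ∀ t ∈ J, ∀ x h, h • q (t, x, h) = F t (x + h) - F t x := by
    intro t ht x h
    have h0 := hF.1 t ht
    have := intervalIntegral.integral_eq_sub_of_hasDerivAt (a := x) (b := x + h) (f := F t) (f' := deriv (F t))
      (fun z _ => (h0.diff z).hasDerivAt) (h0.dcont.intervalIntegrable _ _)
    rw [← this]
    simp only [hq, cl_eq ht]
    have e : ∀ θ : ℝ, deriv (F t) (x + θ * h) = deriv (F t) (x + h * θ) := fun θ => by rw [mul_comm]
    simp only [e]
    rw [intervalIntegral.smul_integral_comp_add_mul]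
    simp
  have hq0 : ∀ t ∈ J, ∀ x ∈ J, q (t, x, 0) = deriv (F t) x := by
    intro t ht x _
    simp [hq, cl_eq ht]
  set S : Set (ℝ × ℝ × ℝ) := J ×ˢ (J ×ˢ Icc (-(1 / 2)) (1 / 2))
  have hS : IsCompact S := isCompact_Icc.prod (isCompact_Icc.prod isCompact_Icc)
  have hne : S.Nonempty := ⟨(0, 0, 0), by simp [S, J]⟩
  obtain ⟨p0, hp0, hmin⟩ := hS.exists_isMinOn hne hqc.norm.continuousOn
  have hpos : ∀ p ∈ S, 0 < ‖q p‖ := by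
    rintro ⟨t, x, h⟩ ⟨ht, hx, hh⟩
    simp only at ht hx hh
    rw [norm_pos_iff]
    intro h0
    have e := hqe t ht x h
    obtain ⟨h1, h2, h3⟩ := hM t ht
    rcases eq_or_ne h 0 with rfl | hne
    · rw [hq0 t ht x hx] at h0; exact h3 x h0
    rw [h0, smul_zero] at e
    have e1 : F t (x + h) = F t x := (sub_eq_zero.1 e.symm)
    have fr : ∀ y, F t (Int.fract y) = F t y := fun y => by
      have := h1.1.sub_int_mul_eq (x := y) ⌊y⌋
      rw [mul_one] at this
      exact this
    have := h2 (x₁ := Int.fract (x + h)) (x₂ := Int.fract x) ⟨Int.fract_nonneg _, Int.fract_lt_one _⟩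
      ⟨Int.fract_nonneg _, Int.fract_lt_one _⟩ (by rw [fr, fr, e1])
    rw [Int.fract_eq_fract] at this
    obtain ⟨z, hz⟩ := this
    have hz' : h = z := by linarith
    have : |h| < 1 := by
      rw [abs_lt]; constructor <;> linarith [hh.1, hh.2]
    rw [hz', ← Int.cast_abs] at this
    have hz0 : |z| < 1 := by exact_mod_cast this
    rw [Int.abs_lt_one_iff] at hz0
    apply hne; rw [hz', hz0]; simp
  refine ⟨‖q p0‖, hpos p0 hp0, fun t ht => ?_⟩
  have h0 := hF.1 t ht
  have hfr : ∀ x : ℝ, Int.fract x ∈ J := fun x => ⟨Int.fract_nonneg _, (Int.fract_lt_one _).le⟩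
  constructor
  · intro x
    have h1 := (per_deriv h0.1).sub_int_mul_eq (x := x) ⌊x⌋
    rw [mul_one] at h1
    rw [← h1]
    have := isMinOn_iff.1 hmin (t, Int.fract x, 0) ⟨ht, hfr x, by simp⟩
    rw [hq0 t ht _ (hfr x)] at this
    exact this
  · intro x h hh
    have h1 : ∀ y, F t (y - ⌊x⌋) = F t y := fun y => by
      have := h0.1.sub_int_mul_eq (x := y) ⌊x⌋
      rwa [mul_one] at this
    have e := hqe t ht (Int.fract x) h
    have e2 : F t (Int.fract x + h) - F t (Int.fract x) = F t (x + h) - F t x := by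
      rw [← h1 (x + h), ← h1 x]; congr 2; unfold Int.fract; ring
    rw [← e2, ← e, norm_smul, mul_comm, Real.norm_eq_abs]
    have := hmin (a := (t, Int.fract x, h)) ⟨ht, hfr x, abs_le.1 hh⟩
    exact mul_le_mul_of_nonneg_left this (abs_nonneg _)



section
variable {T : Type*} [MeasurableSpace T]

lemma int_meas {f : T → ℝ → ℝ} (hf : Measurable fun p : T × ℝ => f p.1 p.2) :
    Measurable fun t => ∫ x in I01, f t x :=
  (hf.stronglyMeasurable.integral_prod_right (ν := volume.restrict I01)).measurable

lemma int_meas2 {f : T → ℝ → ℝ → ℝ} (hf : Measurable fun p : (T × ℝ) × ℝ => f p.1.1 p.1.2 p.2) :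
    Measurable fun t => ∫ x in I01, ∫ y in I01, f t x y :=
  int_meas (f := fun t x => ∫ y in I01, f t x y) (int_meas (T := T × ℝ) (f := fun p y => f p.1 p.2 y) hf)
end

lemma G_meas {s : ℝ} {n : ℕ} {Γ V : ℝ → ℝ → En n}
    (g0 : Measurable (fun p : ℝ × ℝ => Γ p.1 p.2))
    (g1 : Measurable (fun p : ℝ × ℝ => deriv (Γ p.1) p.2))
    (v0 : Measurable (fun p : ℝ × ℝ => V p.1 p.2))
    (v1 : Measurable (fun p : ℝ × ℝ => deriv (V p.1) p.2)) :
    Measurable fun t => Gmet s (Γ t) (V t) (V t) := by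
  have px : Measurable fun p : (ℝ × ℝ) × ℝ => (p.1.1, p.1.2) := by fun_prop
  have py : Measurable fun p : (ℝ × ℝ) × ℝ => (p.1.1, p.2) := by fun_prop
  have g0x : Measurable fun p : (ℝ × ℝ) × ℝ => Γ p.1.1 p.1.2 := g0.comp px
  have g0y : Measurable fun p : (ℝ × ℝ) × ℝ => Γ p.1.1 p.2 := g0.comp py
  have g1x : Measurable fun p : (ℝ × ℝ) × ℝ => deriv (Γ p.1.1) p.1.2 := g1.comp px
  have g1y : Measurable fun p : (ℝ × ℝ) × ℝ => deriv (Γ p.1.1) p.2 := g1.comp py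
  have v0x : Measurable fun p : (ℝ × ℝ) × ℝ => V p.1.1 p.1.2 := v0.comp px
  have v0y : Measurable fun p : (ℝ × ℝ) × ℝ => V p.1.1 p.2 := v0.comp py
  have v1x : Measurable fun p : (ℝ × ℝ) × ℝ => deriv (V p.1.1) p.1.2 := v1.comp px
  have v1y : Measurable fun p : (ℝ × ℝ) × ℝ => deriv (V p.1.1) p.2 := v1.comp py
  have mu : Measurable fun p : (ℝ × ℝ) × ℝ => muW (Γ p.1.1) p.1.2 p.2 := by
    unfold muW; fun_prop
  have RΓ : Measurable fun p : (ℝ × ℝ) × ℝ => Rop s (Γ p.1.1) (Γ p.1.1) p.1.2 p.2 := by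
    unfold Rop DDg
    fun_prop
  have RV : Measurable fun p : (ℝ × ℝ) × ℝ => Rop s (Γ p.1.1) (V p.1.1) p.1.2 p.2 := by
    unfold Rop DDg
    fun_prop
  have Dx : Measurable fun p : (ℝ × ℝ) × ℝ => Dg (Γ p.1.1) (V p.1.1) p.1.2 := by
    unfold Dg; fun_prop
  have Dy : Measurable fun p : (ℝ × ℝ) × ℝ => Dg (Γ p.1.1) (V p.1.1) p.2 := by
    unfold Dg; fun_prop
  have D1 : Measurable fun p : ℝ × ℝ => Dg (Γ p.1) (V p.1) p.2 := by
    unfold Dg; fun_prop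
  have b1 : Measurable fun t => B1 s (Γ t) (V t) (V t) := by
    unfold B1; exact int_meas2 (by fun_prop)
  have b2 : Measurable fun t => B2 s (Γ t) (V t) (V t) := by
    unfold B2; exact int_meas2 (by fun_prop)
  have b3 : Measurable fun t => B3 s (Γ t) (V t) (V t) := by
    unfold B3; exact int_meas2 (by fun_prop)
  have b4 : Measurable fun t => innerH1g (Γ t) (V t) (V t) := by
    unfold innerH1g; exact int_meas (by fun_prop)
  have b5 : Measurable fun t => innerL2g (Γ t) (V t) (V t) := by
    unfold innerL2g; exact int_meas (by fun_prop)
  unfold Gmet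
  fun_prop

lemma sqrtG_int {s : ℝ} (hs : 3 / 2 < s) {n : ℕ} (P : C1Path s n) :
    IntegrableOn (fun t => √(Gmet s (P.Γ t) (P.V t) (P.V t))) J := by
  have hΓ := famΓ P
  have hV := famV P
  obtain ⟨c, hc, hc'⟩ := bilip hs hΓ P.mem
  obtain ⟨M1, hM1, h1⟩ := hΓ.bdd hs
  obtain ⟨M2, hM2, h2⟩ := hV.bdd hs
  obtain ⟨C, hC⟩ := G_bound n s c (M1 + M2) (M1 + M2) hs hc (by positivity) (by positivity)
  have hb : ∀ t ∈ J, Gmet s (P.Γ t) (P.V t) (P.V t) ≤ C := by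
    intro t ht
    obtain ⟨a1, a2, a3⟩ := h1 t ht
    obtain ⟨b1, b2, b3⟩ := h2 t ht
    refine hC _ _ (hΓ.1 t ht) (hV.1 t ht) (hc' t ht).1 (fun x => ?_) (fun x => ?_) (fun x => ?_)
      (hc' t ht).2 (a3.trans ?_) (b3.trans ?_)
    · linarith [a2 x]
    · linarith [b2 x]
    · linarith [b1 x]
    · exact ENNReal.ofReal_le_ofReal (by linarith)
    · exact ENNReal.ofReal_le_ofReal (by linarith)
  have hm : Measurable fun t => Gmet s (P.Γ (cl t)) (P.V (cl t)) (P.V (cl t)) :=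
    G_meas (Γ := fun t => P.Γ (cl t)) (V := fun t => P.V (cl t)) (hΓ.cont hs).1.measurable
      (hΓ.cont hs).2.measurable (hV.cont hs).1.measurable (hV.cont hs).2.measurable
  have hi : IntegrableOn (fun t => √(Gmet s (P.Γ (cl t)) (P.V (cl t)) (P.V (cl t)))) J := by
    refine Measure.integrableOn_of_bounded (M := √C) (by simp [J]) hm.sqrt.aestronglyMeasurable ?_
    refine ae_of_all _ fun t => ?_
    rw [Real.norm_of_nonneg (Real.sqrt_nonneg _)]
    exact Real.sqrt_le_sqrt (hb _ (cl_mem t))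
  refine hi.congr_fun (fun t ht => ?_) measurableSet_Icc
  simp only [cl_eq ht]

lemma ptw {s : ℝ} (hs : 3 / 2 < s) {n : ℕ} (P : C1Path s n) {t : ℝ} (ht : t ∈ Ioo (0 : ℝ) 1) (x : ℝ) :
    HasDerivAt (fun τ => deriv (P.Γ τ) x) (deriv (P.V t) x) t := by
  obtain ⟨C, hC, h⟩ := embed n s hs
  have htJ : t ∈ J := Ioo_subset_Icc_self ht
  rw [hasDerivAt_iff_tendsto_slope_zero]
  have hset : {h : ℝ | t + h ∈ Set.Icc (0 : ℝ) 1 ∧ h ≠ 0} ∈ 𝓝[≠] (0 : ℝ) := by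
    have h1 : ∀ᶠ h : ℝ in 𝓝 0, t + h ∈ Set.Icc (0 : ℝ) 1 := by
      have : Tendsto (fun h : ℝ => t + h) (𝓝 0) (𝓝 t) := by
        have : Continuous fun h : ℝ => t + h := by fun_prop
        simpa using this.tendsto 0
      exact this.eventually (Icc_mem_nhds ht.1 ht.2)
    filter_upwards [self_mem_nhdsWithin, mem_nhdsWithin_of_mem_nhds h1] with h a b using ⟨b, a⟩
  have hle : 𝓝[≠] (0 : ℝ) ≤ 𝓝[{h : ℝ | t + h ∈ Set.Icc (0 : ℝ) 1 ∧ h ≠ 0}] 0 :=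
    le_inf (nhdsWithin_le_nhds) (le_principal_iff.2 hset)
  have hd := ((P.isDeriv t htJ).mono_left hle).const_mul C
  rw [mul_zero] at hd
  rw [tendsto_iff_norm_sub_tendsto_zero]
  refine squeeze_zero' (Eventually.of_forall fun _ => norm_nonneg _) ?_ hd
  filter_upwards [hset] with k hk
  have a0 := (P.mem _ hk.1).1.sub (P.mem t htJ).1
  have a1 := a0.smul k⁻¹
  have a2 := (h _ (a1.sub (P.memV t htJ)) x).2
  rw [deriv_sub_fun' a1 (P.memV t htJ), deriv_smul_fun a0,
    deriv_sub_fun' (P.mem _ hk.1).1 (P.mem t htJ).1] at a2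
  exact a2

lemma norm_hd {n : ℕ} {f : ℝ → En n} {f' : En n} {t : ℝ} (hf : HasDerivAt f f' t) (h0 : f t ≠ 0) :
    HasDerivAt (fun τ => ‖f τ‖) (⟪f t, f'⟫ / ‖f t‖) t := by
  have h1 := hf.norm_sq.sqrt (by simpa using h0)
  simp only [Real.sqrt_sq (norm_nonneg _)] at h1
  convert h1 using 1
  field_simp

lemma len_pos {s : ℝ} {n : ℕ} {γ : ℝ → En n} (h : InM s γ) : 0 < arcLen γ := by
  unfold arcLen
  rw [setIntegral_pos_iff_support_of_nonneg_ae (ae_of_all _ fun x => norm_nonneg _)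
    (int01 h.1.dcont.norm)]
  have : (Function.support fun x => ‖deriv γ x‖) = univ := by
    ext x; simp [h.2.2 x]
  rw [this, univ_inter, vol01]; exact one_pos

lemma len_deriv {s : ℝ} (hs : 3 / 2 < s) {n : ℕ} (P : C1Path s n) {t : ℝ} (ht : t ∈ Ioo (0 : ℝ) 1) :
    HasDerivAt (fun τ => arcLen (P.Γ τ))
      (∫ x in I01, ⟪deriv (P.Γ t) x, deriv (P.V t) x⟫ / ‖deriv (P.Γ t) x‖) t := by
  obtain ⟨M2, hM2, h2⟩ := (famV P).bdd hs
  have hJ : ∀ {τ : ℝ}, τ ∈ Ioo (0 : ℝ) 1 → τ ∈ J := fun h => Ioo_subset_Icc_self h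
  have hn : Ioo (0 : ℝ) 1 ∈ 𝓝 t := Ioo_mem_nhds ht.1 ht.2
  unfold arcLen
  refine (hasDerivAt_integral_of_dominated_loc_of_deriv_le (μ := volume.restrict I01)
    (F := fun τ x => ‖deriv (P.Γ τ) x‖)
    (F' := fun τ x => ⟪deriv (P.Γ τ) x, deriv (P.V τ) x⟫ / ‖deriv (P.Γ τ) x‖)
    (bound := fun _ => M2) hn ?_ ?_ ?_ ?_ ?_ ?_).2
  · filter_upwards [hn] with τ hτ
    exact (P.mem τ (hJ hτ)).1.dcont.norm.aestronglyMeasurable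
  · exact int01 (P.mem t (hJ ht)).1.dcont.norm
  · have a := (P.mem t (hJ ht)).1.dcont
    have b := (P.memV t (hJ ht)).dcont
    exact (by fun_prop : Measurable fun x => ⟪deriv (P.Γ t) x, deriv (P.V t) x⟫ / ‖deriv (P.Γ t) x‖).aestronglyMeasurable
  · refine ae_of_all _ fun x τ hτ => ?_
    have p : 0 < ‖deriv (P.Γ τ) x‖ := norm_pos_iff.2 ((P.mem τ (hJ hτ)).2.2 x)
    rw [norm_div, norm_norm, div_le_iff₀ p]
    calc _ ≤ ‖deriv (P.Γ τ) x‖ * ‖deriv (P.V τ) x‖ := norm_inner_le_norm _ _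
      _ ≤ _ := by rw [mul_comm]; gcongr; exact (h2 τ (hJ hτ)).2.1 x
  · exact int01 continuous_const
  · refine ae_of_all _ fun x τ hτ => ?_
    exact norm_hd (ptw hs P hτ x) ((P.mem τ (hJ hτ)).2.2 x)

lemma len_deriv_bd {s : ℝ} (hs : 3 / 2 < s) {n : ℕ} {γ v : ℝ → En n} (hγ : InM s γ) (hv : InHs s v) :
    |∫ x in I01, ⟪deriv γ x, deriv v x⟫ / ‖deriv γ x‖| ≤ √(Gmet s γ v v) * √(arcLen γ) := by
  have p : ∀ x, 0 < ‖deriv γ x‖ := fun x => norm_pos_iff.2 (hγ.2.2 x)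
  have c1 := hγ.1.dcont
  have c2 := hv.dcont
  have h1 : |∫ x in I01, ⟪deriv γ x, deriv v x⟫ / ‖deriv γ x‖| ≤ ∫ x in I01, ‖deriv v x‖ := by
    rw [← Real.norm_eq_abs]
    refine norm_integral_le_of_norm_le (int01 c2.norm) (ae_of_all _ fun x => ?_)
    rw [norm_div, norm_norm, div_le_iff₀ (p x), mul_comm]
    exact norm_inner_le_norm _ _
  have h2 := cs01 c2.norm c1.norm p
  have e : ∫ x in I01, ‖deriv v x‖ ^ 2 / ‖deriv γ x‖ = innerH1g γ v v := by
    unfold innerH1g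
    congr 1; funext x
    rw [real_inner_self_eq_norm_sq, Dg, norm_smul, norm_inv, norm_norm]
    have := p x
    field_simp
  rw [e] at h2
  have h3 : innerH1g γ v v ≤ Gmet s γ v v := by
    obtain ⟨a, b, c, d, e⟩ := B_nonneg s γ v
    unfold Gmet
    have : 0 ≤ (2 * s + 1) * B2 s γ v v := mul_nonneg (by linarith) b
    linarith
  have hL : 0 ≤ arcLen γ := (len_pos hγ).le
  have h4 : (∫ x in I01, ‖deriv v x‖) ^ 2 ≤ Gmet s γ v v * arcLen γ :=
    h2.trans (mul_le_mul_of_nonneg_right h3 hL)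
  refine h1.trans ?_
  rw [← Real.sqrt_mul' _ hL]
  exact Real.le_sqrt_of_sq_le h4

lemma len_cont {s : ℝ} (hs : 3 / 2 < s) {n : ℕ} (P : C1Path s n) :
    ContinuousOn (fun t => arcLen (P.Γ t)) J := by
  have h1 : Continuous fun t => ∫ x in (0:ℝ)..1, ‖deriv (P.Γ (cl t)) x‖ :=
    intervalIntegral.continuous_parametric_intervalIntegral_of_continuous'
      (f := fun t x => ‖deriv (P.Γ (cl t)) x‖) (((famΓ P).cont hs).2.norm) 0 1
  refine h1.continuousOn.congr fun t ht => ?_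
  simp only [cl_eq ht]
  rw [intervalIntegral.integral_of_le zero_le_one, ← integral_Ico_eq_integral_Ioc]
  rfl

lemma main_le {s : ℝ} (hs : 3 / 2 < s) {n : ℕ} (P : C1Path s n) :
    |√(arcLen (P.Γ 1)) - √(arcLen (P.Γ 0))| ≤ 1 / 2 * pathLen P := by
  set φ : ℝ → ℝ := fun t => 1 / 2 * √(Gmet s (P.Γ t) (P.V t) (P.V t)) with hφ
  have hφi : IntegrableOn φ (Icc 0 1) := (sqrtG_int hs P).const_mul _
  have hI : ∫ t in (0:ℝ)..1, φ t = 1 / 2 * pathLen P := by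
    rw [hφ, intervalIntegral.integral_const_mul]; rfl
  set f : ℝ → ℝ := fun t => √(arcLen (P.Γ t)) with hf
  set f' : ℝ → ℝ := fun t =>
    (∫ x in I01, ⟪deriv (P.Γ t) x, deriv (P.V t) x⟫ / ‖deriv (P.Γ t) x‖) /
      (2 * √(arcLen (P.Γ t))) with hf'
  have hfc : ContinuousOn f (Icc 0 1) := (len_cont hs P).sqrt
  have hfd : ∀ t ∈ Ioo (0:ℝ) 1, HasDerivAt f (f' t) t := fun t ht =>
    (len_deriv hs P ht).sqrt (len_pos (P.mem t (Ioo_subset_Icc_self ht))).ne'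
  have hb : ∀ t ∈ Ioo (0:ℝ) 1, |f' t| ≤ φ t := by
    intro t ht
    have hJ : t ∈ J := Ioo_subset_Icc_self ht
    have h1 := len_deriv_bd hs (P.mem t hJ) (P.memV t hJ)
    have h2 : 0 < √(arcLen (P.Γ t)) := Real.sqrt_pos.2 (len_pos (P.mem t hJ))
    simp only [hf', hφ]
    rw [abs_div, abs_of_pos (by positivity : 0 < 2 * √(arcLen (P.Γ t))), div_le_iff₀ (by positivity)]
    linarith
  have u1 := intervalIntegral.sub_le_integral_of_hasDeriv_right_of_le zero_le_one hfc
    (fun t ht => (hfd t ht).hasDerivWithinAt) hφi (fun t ht => (le_abs_self _).trans (hb t ht))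
  have u2 := intervalIntegral.sub_le_integral_of_hasDeriv_right_of_le zero_le_one hfc.neg
    (fun t ht => (hfd t ht).neg.hasDerivWithinAt) hφi (fun t ht => (neg_le_abs _).trans (hb t ht))
  rw [hI] at u1 u2
  simp only [Pi.neg_apply] at u2
  rw [abs_le]
  constructor <;> linarith

lemma part1 {s : ℝ} (hs : 3 / 2 < s) {n : ℕ} (γ₀ γ₁ : ℝ → En n) :
    ENNReal.ofReal |Real.sqrt (arcLen γ₁) - Real.sqrt (arcLen γ₀)| ≤
        ENNReal.ofReal (1 / 2) * geodDist s γ₁ γ₀ := by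
  have h : ENNReal.ofReal (2 * |Real.sqrt (arcLen γ₁) - Real.sqrt (arcLen γ₀)|) ≤
      geodDist s γ₁ γ₀ := by
    refine le_iInf₂ fun P hP => ENNReal.ofReal_le_ofReal ?_
    have := main_le hs P
    rw [hP.1, hP.2, abs_sub_comm] at this
    linarith
  calc _ = ENNReal.ofReal (1 / 2) *
        ENNReal.ofReal (2 * |Real.sqrt (arcLen γ₁) - Real.sqrt (arcLen γ₀)|) := by
        rw [← ENNReal.ofReal_mul (by norm_num)]; congr 1; ring
    _ ≤ _ := by gcongr

/-- Lipschitz continuity of `√L`: for all `γ₀, γ₁ ∈ 𝓜` one has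
`|√(L(γ₁)) − √(L(γ₀))| ≤ (1/2) · d_G(γ₁,γ₀)`; in particular the length functional `L`
is bounded on every `G`-bounded subset of `𝓜`. -/
theorem statement11 (s : ℝ) (hs : s ∈ Set.Ioo (3 / 2 : ℝ) 2) (n : ℕ) (hn : 2 ≤ n) :
    (∀ γ₀ γ₁ : ℝ → En n, InM s γ₀ → InM s γ₁ →
      ENNReal.ofReal |Real.sqrt (arcLen γ₁) - Real.sqrt (arcLen γ₀)| ≤
        ENNReal.ofReal (1 / 2) * geodDist s γ₁ γ₀) ∧
    ∀ U : Set (ℝ → En n), GBounded s U → ∃ M : ℝ, ∀ γ ∈ U, arcLen γ ≤ M := by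
  refine ⟨fun γ₀ γ₁ _ _ => part1 hs.1 γ₀ γ₁, ?_⟩
  rintro U ⟨hU, γ₀, h0, R, hR⟩
  refine ⟨(√(arcLen γ₀) + 1 / 2 * max R 0) ^ 2, fun γ hγ => ?_⟩
  have h1 := part1 hs.1 γ₀ γ
  have h2 : ENNReal.ofReal |√(arcLen γ) - √(arcLen γ₀)| ≤ ENNReal.ofReal (1 / 2 * max R 0) := by
    rw [ENNReal.ofReal_mul (by norm_num)]
    refine h1.trans ?_
    gcongr
    exact (hR γ hγ).trans (ENNReal.ofReal_le_ofReal (le_max_left _ _))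
  rw [ENNReal.ofReal_le_ofReal_iff (by positivity)] at h2
  have h3 := (le_abs_self _).trans h2
  rw [← Real.sq_sqrt (len_pos (hU γ hγ)).le]
  exact pow_le_pow_left₀ (Real.sqrt_nonneg _) (by linarith) 2
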